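/- arXiv:1411.3842 — 2 statements merged into one kernel-verified Lean document; each statement's English description precedes it below -/
import Mathlib

section
/- Let n ≥ 6 be an even integer and let K ⊂ ℝ² be an o-symmetric convex polygon with at most n vertices and with the origin o in its interior. Then V(K)·V(K*) ≤ n²·sin²(π/n). -/
/-!
Let `x 0, …, x (m - 1), -x 0, …, -x (m - 1)` be the vertices of `K` in counterclockwise order, with
`2 * m ≤ n`, and let `d i` be the determinant of `x i` and `x (i + 1)`. Cutting `K` and its polar
into triangles at the origin gives `V(K) = ∑ d i` and `V(K*) = ∑ L i` over half a turn, where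
`L i` is the determinant of the two endpoints of the edge of the polar dual to `x (i + 1)`. Only the upper bounds are needed, and these come from coverings by triangles
(`volume_product_le`).

The coordinates of `x` solve a discrete Sturm–Liouville equation with weights `1 / d i` and
potential `L i`, with the antiperiodic boundary condition `x (i + m) = -x i`. Since `x` makes half
a turn in `m` steps, it is a ground state, which yields the discrete Wirtinger inequality
`∑ L i * u (i + 1) ^ 2 ≤ ∑ (u (i + 1) - u i) ^ 2 / d i` for every antiperiodic `u` (`wirtinger`).

Choose `s > 0` and angles `t i` in `[0, π / 2]` with `sin (t i) = s * d i` and `∑ t i = π / 2`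
(`exists_angles`), and take for `u` the cosine and the sine of the partial sums of `2 * t i`.
Adding the two inequalities gives `∑ L i ≤ ∑ 4 * sin (t i) ^ 2 / d i = 4 * s ^ 2 * ∑ d i`, hence
`V(K) * V(K*) ≤ 4 * (∑ sin (t i)) ^ 2`, and Jensen's inequality finishes the proof
(`core_bound`).
-/

open MeasureTheory Real
open scoped Pointwise RealInnerProductSpace ENNReal

noncomputable section

abbrev E2 := EuclideanSpace ℝ (Fin 2)

/-- The polar body `K* = {y : ⟪x,y⟫ ≤ 1 for all x ∈ K}`. -/
def polarBody (K : Set E2) : Set E2 := {y | ∀ x ∈ K, ⟪x, y⟫ ≤ 1}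

/-! ### Areas of triangles -/

/-- The determinant of two vectors of the plane. -/
def cr (p q : E2) : ℝ := p 0 * q 1 - p 1 * q 0

/-- The closed triangle with vertices `0`, `p`, `q` (possibly degenerate). -/
def tri (p q : E2) : Set E2 :=
  {z | ∃ α β : ℝ, 0 ≤ α ∧ 0 ≤ β ∧ α + β ≤ 1 ∧ z = α • p + β • q}

lemma volume_std_tri :
    volume {z : E2 | 0 ≤ z 0 ∧ 0 ≤ z 1 ∧ z 0 + z 1 ≤ 1} = ENNReal.ofReal (1 / 2) := by
  have hmp : MeasurePreserving (fun z : E2 => (z 0, z 1)) volume (volume : Measure (ℝ × ℝ)) :=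
    (volume_preserving_finTwoArrow ℝ).comp (PiLp.volume_preserving_ofLp (Fin 2))
  set T : Set (ℝ × ℝ) := {p | 0 ≤ p.1 ∧ 0 ≤ p.2 ∧ p.1 + p.2 ≤ 1} with hT
  have hTm : MeasurableSet T := by
    have : IsClosed T := by
      apply IsClosed.inter (isClosed_le continuous_const continuous_fst)
      apply IsClosed.inter (isClosed_le continuous_const continuous_snd)
      exact isClosed_le (continuous_fst.add continuous_snd) continuous_const
    exact this.measurableSet
  have h1 : {z : E2 | 0 ≤ z 0 ∧ 0 ≤ z 1 ∧ z 0 + z 1 ≤ 1} = (fun z : E2 => (z 0, z 1)) ⁻¹' T := rfl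
  rw [h1, hmp.measure_preimage hTm.nullMeasurableSet, Measure.volume_eq_prod,
    Measure.prod_apply hTm]
  have h2 : ∀ x : ℝ, volume (Prod.mk x ⁻¹' T) =
      (Set.Icc (0 : ℝ) 1).indicator (fun x => ENNReal.ofReal (1 - x)) x := by
    intro x
    by_cases hx : x ∈ Set.Icc (0 : ℝ) 1
    · rw [Set.indicator_of_mem hx]
      have : Prod.mk x ⁻¹' T = Set.Icc 0 (1 - x) := by
        ext y
        simp only [hT, Set.mem_preimage, Set.mem_ofPred_eq, Set.mem_Icc]
        constructor
        · rintro ⟨_, h, h'⟩; exact ⟨h, by linarith⟩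
        · rintro ⟨h, h'⟩; exact ⟨hx.1, h, by linarith⟩
      rw [this, Real.volume_Icc, sub_zero]
    · rw [Set.indicator_of_notMem hx]
      have : Prod.mk x ⁻¹' T = ∅ := by
        ext y
        simp only [hT, Set.mem_preimage, Set.mem_ofPred_eq, Set.mem_empty_iff_false, iff_false]
        rintro ⟨h0, h, h'⟩
        exact hx ⟨h0, by linarith⟩
      rw [this, measure_empty]
  simp_rw [h2]
  rw [lintegral_indicator measurableSet_Icc, ← ofReal_integral_eq_lintegral_ofReal]
  · rw [integral_Icc_eq_integral_Ioc, ← intervalIntegral.integral_of_le zero_le_one,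
      intervalIntegral.integral_sub (by simp) (by simp)]
    norm_num
  · exact (continuous_const.sub continuous_id).continuousOn.integrableOn_Icc
  · filter_upwards [ae_restrict_mem measurableSet_Icc] with x hx
    simp only [Pi.zero_apply]; linarith [hx.2]

lemma volume_tri (p q : E2) : volume (tri p q) = ENNReal.ofReal (|cr p q| / 2) := by
  set f : E2 →ₗ[ℝ] E2 := Matrix.toLpLin 2 2 !![p 0, q 0; p 1, q 1] with hf
  have hdet : LinearMap.det f = cr p q := by
    rw [hf]
    simp [Matrix.toLpLin_eq_toLin, LinearMap.det_toLin, Matrix.det_fin_two, cr]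
    ring
  have himg : tri p q = f '' {z : E2 | 0 ≤ z 0 ∧ 0 ≤ z 1 ∧ z 0 + z 1 ≤ 1} := by
    have hfz : ∀ z : E2, f z = z 0 • p + z 1 • q := by
      intro z
      ext i
      fin_cases i <;> simp [hf, Matrix.toLpLin_apply, dotProduct, Fin.sum_univ_two] <;> ring
    ext z
    constructor
    · rintro ⟨α, β, h1, h2, h3, rfl⟩
      exact ⟨!₂[α, β], by simpa using ⟨h1, h2, h3⟩, by rw [hfz]; simp⟩
    · rintro ⟨w, ⟨h1, h2, h3⟩, rfl⟩
      exact ⟨w 0, w 1, h1, h2, h3, hfz w⟩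
  rw [himg, Measure.addHaar_image_linearMap, hdet, volume_std_tri, ← ENNReal.ofReal_mul (abs_nonneg _)]
  congr 1; ring

/-! ### Two facts about sines -/

/-- Positive numbers `d i` are, up to a common factor, the sines of angles in `[0, π / 2]` with sum
`π / 2`: for `s` the reciprocal of the largest `d i`, one term of the sum is already `π / 2`, and
the intermediate value theorem applies. -/
lemma exists_angles (m : ℕ) (hm : 0 < m) (d : ℕ → ℝ) (hd : ∀ i, 0 < d i) :
    ∃ s : ℝ, 0 < s ∧ (∀ i < m, s * d i ≤ 1) ∧
      ∑ i ∈ Finset.range m, Real.arcsin (s * d i) = π / 2 := by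
  obtain ⟨k, hk, hmax⟩ := Finset.exists_max_image (Finset.range m) d ⟨0, by simpa using hm⟩
  set f : ℝ → ℝ := fun s => ∑ i ∈ Finset.range m, Real.arcsin (s * d i) with hf
  have hcont : Continuous f := by
    rw [hf]
    exact continuous_finsetSum _ fun i _ => Real.continuous_arcsin.comp (by fun_prop)
  have h0 : f 0 = 0 := by simp [hf]
  have hnn : ∀ i, 0 ≤ (d k)⁻¹ * d i := fun i => mul_nonneg (inv_nonneg.2 (hd k).le) (hd i).le
  have h1 : π / 2 ≤ f (d k)⁻¹ := by
    have h := Finset.single_le_sum (f := fun i => Real.arcsin ((d k)⁻¹ * d i))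
      (fun i _ => Real.arcsin_nonneg.2 (hnn i)) hk
    simpa [inv_mul_cancel₀ (hd k).ne'] using h
  have hpi := Real.pi_pos
  obtain ⟨s, hs, hfs⟩ := intermediate_value_Icc (inv_nonneg.2 (hd k).le) hcont.continuousOn
    (show π / 2 ∈ Set.Icc (f 0) (f (d k)⁻¹) from ⟨by rw [h0]; positivity, h1⟩)
  refine ⟨s, lt_of_le_of_ne hs.1 ?_, fun i hi => ?_, hfs⟩
  · rintro rfl
    rw [h0] at hfs; linarith
  · calc s * d i ≤ (d k)⁻¹ * d k :=
        mul_le_mul hs.2 (hmax i (by simpa using hi)) (hd i).le (inv_nonneg.2 (hd k).le)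
      _ = 1 := inv_mul_cancel₀ (hd k).ne'

/-- Jensen's inequality for `sin` bounds the sum by `m * sin (π / (2 * m))`, and concavity once more
shows that this increases with `m`. -/
lemma sum_sin_le (m n : ℕ) (hm : 0 < m) (hmn : 2 * m ≤ n) (t : ℕ → ℝ)
    (ht : ∀ i < m, t i ∈ Set.Icc 0 π) (hsum : ∑ i ∈ Finset.range m, t i = π / 2) :
    2 * ∑ i ∈ Finset.range m, Real.sin (t i) ≤ n * Real.sin (π / n) := by
  have hc := strictConcaveOn_sin_Icc.concaveOn
  have hm' : (0 : ℝ) < m := by exact_mod_cast hm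
  have hmn' : 2 * (m : ℝ) ≤ n := by exact_mod_cast hmn
  have hn' : (0 : ℝ) < n := by linarith
  have hpi := Real.pi_pos
  have J := hc.le_map_sum (t := Finset.range m) (w := fun _ => (m : ℝ)⁻¹) (p := t)
    (fun _ _ => by positivity) (by simp [hm'.ne']) (fun i hi => ht i (by simpa using hi))
  simp only [smul_eq_mul, ← Finset.mul_sum, hsum] at J
  have hx0 : (m : ℝ)⁻¹ * (π / 2) ∈ Set.Icc 0 π := ⟨by positivity, by
      rw [inv_mul_le_iff₀ hm']
      have : (1 : ℝ) ≤ m := by exact_mod_cast hm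
      nlinarith⟩
  have J2 := hc.2 hx0 (show (0 : ℝ) ∈ Set.Icc 0 π from ⟨le_rfl, hpi.le⟩)
    (show (0 : ℝ) ≤ 2 * m / n by positivity)
    (show (0 : ℝ) ≤ 1 - 2 * m / n by rw [sub_nonneg, div_le_one hn']; exact hmn') (by ring)
  simp only [smul_eq_mul, mul_zero, add_zero, Real.sin_zero] at J2
  have e : 2 * (m : ℝ) / n * ((m : ℝ)⁻¹ * (π / 2)) = π / n := by field_simp
  rw [e] at J2
  rw [inv_mul_le_iff₀ hm'] at J
  rw [div_mul_eq_mul_div, div_le_iff₀ hn'] at J2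
  nlinarith

/-! ### The discrete Wirtinger inequality -/

lemma sum_shift (m : ℕ) (f : ℕ → ℝ) (hf : f m = f 0) :
    ∑ i ∈ Finset.range m, f (i + 1) = ∑ i ∈ Finset.range m, f i := by
  have := Finset.sum_range_succ f m
  rw [Finset.sum_range_succ'] at this
  linarith

/-- A discrete Picone inequality: if `v` solves the three-term recurrence with weights `w`, `c`,
vanishes at `0` and `m` and is positive in between, then the quadratic form of the recurrence is
nonnegative on sequences vanishing at `0` and `m`. It is in fact the sum of the squares
`w i * v i * v (i + 1) * (z i / v i - z (i + 1) / v (i + 1)) ^ 2`. -/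
lemma picone (m : ℕ) (w c v z : ℕ → ℝ) (hw : ∀ i, 0 < w i)
    (hv0 : v 0 = 0) (hvm : v m = 0) (hv : ∀ i, 0 < i → i < m → 0 < v i)
    (hrec : ∀ i, w (i + 1) * v (i + 2) + w i * v i = c (i + 1) * v (i + 1))
    (hz0 : z 0 = 0) (hzm : z m = 0) :
    0 ≤ ∑ i ∈ Finset.range m, (c (i + 1) * z (i + 1) ^ 2 - 2 * w i * z i * z (i + 1)) := by
  have key : ∀ k, k + 1 < m →
      w (k + 1) * v (k + 2) / v (k + 1) * z (k + 1) ^ 2 ≤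
      ∑ i ∈ Finset.range (k + 1), (c (i + 1) * z (i + 1) ^ 2 - 2 * w i * z i * z (i + 1)) := by
    intro k
    induction k with
    | zero =>
      intro hk
      have h1 := hv 1 one_pos hk
      have h := hrec 0
      simp only [hv0, mul_zero, add_zero, zero_add] at h
      simp [hz0, h, h1.ne']
    | succ k ih =>
      intro hk
      have h1 := hv (k + 1) (by omega) (by omega)
      have h2 := hv (k + 2) (by omega) (by omega)
      rw [Finset.sum_range_succ]
      have hc : c (k + 2) = (w (k + 2) * v (k + 3) + w (k + 1) * v (k + 1)) / v (k + 2) := by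
        rw [eq_div_iff h2.ne']; exact (hrec (k + 1)).symm
      have hsq : 0 ≤ w (k + 1) * (v (k + 1) * v (k + 2)) *
          (z (k + 1) / v (k + 1) - z (k + 2) / v (k + 2)) ^ 2 := by
        have := hw (k + 1); positivity
      have e : w (k + 1) * v (k + 2) / v (k + 1) * z (k + 1) ^ 2
          + (c (k + 2) * z (k + 2) ^ 2 - 2 * w (k + 1) * z (k + 1) * z (k + 2))
          - w (k + 2) * v (k + 3) / v (k + 2) * z (k + 2) ^ 2
          = w (k + 1) * (v (k + 1) * v (k + 2)) *
          (z (k + 1) / v (k + 1) - z (k + 2) / v (k + 2)) ^ 2 := by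
        rw [hc]; field_simp; ring
      have := ih (by omega)
      simp only [show k + 1 + 1 = k + 2 from rfl, show k + 1 + 2 = k + 3 from rfl] at *
      linarith
  rcases m with _ | _ | k
  · simp
  · simp [hz0, hzm]
  · have h := key k (by omega)
    rw [Finset.sum_range_succ]
    simp only [show k + 1 + 1 = k + 2 from rfl] at *
    rw [hvm] at h
    rw [hzm]
    simpa using h

/-- The coefficient of `u (i + 1) ^ 2` is twice the area of the triangle spanned by two consecutive
vertices of the polar body. Both coordinates of `x` give equality, so the linear functional of `x`
that agrees with `u` at `x 0` may be subtracted from `u`; the difference vanishes at `0` and `m`,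
and `picone` applies with `v i = cr (x 0) (x i)`. -/
lemma wirtinger (m : ℕ) (x : ℕ → E2) (hx : ∀ i, x (i + m) = -x i)
    (hpos : ∀ i, 0 < cr (x i) (x (i + 1))) (hpos0 : ∀ i, 0 < i → i < m → 0 < cr (x 0) (x i))
    (u : ℕ → ℝ) (hu : ∀ i, u (i + m) = -u i) :
    ∑ i ∈ Finset.range m, (cr (x i) (x (i + 1)) + cr (x (i + 1)) (x (i + 2)) - cr (x i) (x (i + 2)))
        / (cr (x i) (x (i + 1)) * cr (x (i + 1)) (x (i + 2))) * u (i + 1) ^ 2 ≤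
      ∑ i ∈ Finset.range m, (u (i + 1) - u i) ^ 2 / cr (x i) (x (i + 1)) := by
  set d : ℕ → ℝ := fun i => cr (x i) (x (i + 1)) with hd
  have hdp : ∀ i, 0 < d i := hpos
  have hdm : d m = d 0 := by
    have h1 := hx 0
    have h2 := hx 1
    rw [zero_add] at h1
    rw [add_comm] at h2
    simp only [hd, h1, h2, cr, zero_add]; simp
  set w : ℕ → ℝ := fun i => (d i)⁻¹ with hw
  set c : ℕ → ℝ := fun i => cr (x (i - 1)) (x (i + 1)) * (w (i - 1) * w i) with hc
  -- Every linear functional of the vertices solves the recurrence.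
  have hrec : ∀ a b : ℝ, ∀ i, w (i + 1) * (a * x (i + 2) 0 + b * x (i + 2) 1)
      + w i * (a * x i 0 + b * x i 1) = c (i + 1) * (a * x (i + 1) 0 + b * x (i + 1) 1) := by
    intro a b i
    have h1 := (hdp i).ne'
    have h2 := (hdp (i + 1)).ne'
    simp only [hc, hw, Nat.add_sub_cancel]
    field_simp
    simp only [hd, cr, show i + 1 + 1 = i + 2 from rfl]
    ring
  have hum : u m = -u 0 := by simpa using hu 0
  have hxm : x m = -x 0 := by simpa using hx 0
  -- `l i` is the value at `x i` of a linear functional that agrees with `u` at `x 0`.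
  set a : ℝ := u 0 * x 1 1 / d 0 with ha
  set b : ℝ := -(u 0 * x 1 0) / d 0 with hb
  set l : ℕ → ℝ := fun i => a * x i 0 + b * x i 1 with hl
  have hl0 : l 0 = u 0 := by
    have h1 := (hdp 0).ne'
    simp only [hl, ha, hb]
    field_simp
    simp only [hd, cr, zero_add]
    ring
  have hlm : l m = -u 0 := by rw [← hl0]; simp [hl, hxm]; ring
  have hlm1 : l (m + 1) = -l 1 := by
    have h2 := hx 1
    rw [add_comm] at h2
    simp [hl, h2]; ring
  have hP := picone m w c (fun i => cr (x 0) (x i)) (fun i => u i - l i)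
    (fun i => inv_pos.2 (hdp i)) (by simp [cr, mul_comm]) (by rw [hxm]; simp [cr, mul_comm])
    hpos0 (fun i => by
      have := hrec (-(x 0 1)) (x 0 0) i
      simp only [cr]; linear_combination this) (by simp [hl0]) (by simp [hlm, hum])
  have hQ : ∑ i ∈ Finset.range m, (c (i + 1) * u (i + 1) ^ 2 - 2 * w i * u i * u (i + 1)) =
      ∑ i ∈ Finset.range m, (c (i + 1) * (u (i + 1) - l (i + 1)) ^ 2
        - 2 * w i * (u i - l i) * (u (i + 1) - l (i + 1))) := by
    have hg := sum_shift m (fun i => 2 * w i * (u i - l i) * l (i + 1) + w i * l i * l (i + 1))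
      (by simp only [hum, hlm, hlm1, hw, hdm, hl0, zero_add]; ring)
    rw [← sub_eq_zero, ← Finset.sum_sub_distrib]
    rw [← sub_eq_zero, ← Finset.sum_sub_distrib] at hg
    rw [← hg]
    refine Finset.sum_congr rfl fun i _ => ?_
    have h := hrec a b i
    change w (i + 1) * l (i + 2) + w i * l i = c (i + 1) * l (i + 1) at h
    simp only [show i + 1 + 1 = i + 2 from rfl]
    linear_combination (-(2 * (u (i + 1) - l (i + 1)) + l (i + 1))) * h
  rw [← hQ] at hP
  have hs := sum_shift m (fun i => w i * u i ^ 2) (by simp only [hum, hw, hdm]; ring)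
  have e : ∑ i ∈ Finset.range m, (u (i + 1) - u i) ^ 2 / cr (x i) (x (i + 1))
      - ∑ i ∈ Finset.range m, (cr (x i) (x (i + 1)) + cr (x (i + 1)) (x (i + 2))
        - cr (x i) (x (i + 2)))
        / (cr (x i) (x (i + 1)) * cr (x (i + 1)) (x (i + 2))) * u (i + 1) ^ 2
      = ∑ i ∈ Finset.range m, (c (i + 1) * u (i + 1) ^ 2 - 2 * w i * u i * u (i + 1)) := by
    rw [← sub_eq_zero] at hs
    rw [← sub_eq_zero, ← neg_eq_zero, ← hs, ← Finset.sum_sub_distrib, ← Finset.sum_sub_distrib,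
      ← Finset.sum_sub_distrib, ← Finset.sum_neg_distrib]
    refine Finset.sum_congr rfl fun i _ => ?_
    have h1 := (hdp i).ne'
    have h2 := (hdp (i + 1)).ne'
    simp only [hc, hw, Nat.add_sub_cancel]
    change -((u (i + 1) - u i) ^ 2 / d i - (d i + d (i + 1) - cr (x i) (x (i + 2)))
        / (d i * d (i + 1)) * u (i + 1) ^ 2 - _) = _
    simp only [show i + 1 + 1 = i + 2 from rfl]
    field_simp
    ring
  linarith

/-- The two sums are the areas of the polygon and of its polar. Testing `wirtinger` with the points
`(cos φ i, sin φ i)` of the unit circle, where `φ (i + 1) - φ i = 2 * t i` and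
`sin (t i) = s * d i`, bounds the second sum by `4 * s ^ 2 * ∑ d i`. -/
lemma core_bound (m n : ℕ) (hm : 2 ≤ m) (hmn : 2 * m ≤ n) (x : ℕ → E2)
    (hx : ∀ i, x (i + m) = -x i)
    (hpos : ∀ i, 0 < cr (x i) (x (i + 1))) (hpos0 : ∀ i, 0 < i → i < m → 0 < cr (x 0) (x i)) :
    (∑ i ∈ Finset.range m, cr (x i) (x (i + 1))) *
    (∑ i ∈ Finset.range m, (cr (x i) (x (i + 1)) + cr (x (i + 1)) (x (i + 2)) - cr (x i) (x (i + 2)))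
        / (cr (x i) (x (i + 1)) * cr (x (i + 1)) (x (i + 2)))) ≤
      (n : ℝ) ^ 2 * Real.sin (π / n) ^ 2 := by
  obtain ⟨s, hs, hs1, hsum⟩ := exists_angles m (by omega) (fun i => cr (x i) (x (i + 1))) hpos
  set d : ℕ → ℝ := fun i => cr (x i) (x (i + 1)) with hd
  have hdper : ∀ i, d (i + m) = d i := by
    intro i
    have h1 := hx i
    have h2 := hx (i + 1)
    rw [show i + 1 + m = i + m + 1 by ring] at h2
    simp only [hd, h1, h2, cr]; simp
  set t : ℕ → ℝ := fun i => Real.arcsin (s * d i) with ht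
  have hst : ∀ i < m, Real.sin (t i) = s * d i := fun i hi =>
    Real.sin_arcsin (by have := mul_pos hs (hpos i); simp only [hd]; linarith) (hs1 i hi)
  set φ : ℕ → ℝ := fun i => ∑ j ∈ Finset.range i, 2 * t j with hφ
  have hφs : ∀ i, φ (i + 1) = φ i + 2 * t i := fun i => Finset.sum_range_succ _ _
  have hφm : ∀ i, φ (i + m) = φ i + π := by
    intro i
    induction i with
    | zero =>
      simp only [hφ, zero_add, Finset.range_zero, Finset.sum_empty, ← Finset.mul_sum]
      rw [hsum]; ring
    | succ i ih =>
      have : t (i + m) = t i := by simp only [ht, hdper]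
      rw [show i + 1 + m = i + m + 1 by ring, hφs, hφs, ih, this]; ring
  have h1 := wirtinger m x hx hpos hpos0 (fun i => Real.cos (φ i))
    (fun i => by simp only [hφm, Real.cos_add_pi])
  have h2 := wirtinger m x hx hpos hpos0 (fun i => Real.sin (φ i))
    (fun i => by simp only [hφm, Real.sin_add_pi])
  have h3 := add_le_add h1 h2
  rw [← Finset.sum_add_distrib, ← Finset.sum_add_distrib] at h3
  simp only [← mul_add, Real.cos_sq_add_sin_sq, mul_one, ← add_div] at h3
  have h4 : ∑ i ∈ Finset.range m, ((Real.cos (φ (i + 1)) - Real.cos (φ i)) ^ 2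
      + (Real.sin (φ (i + 1)) - Real.sin (φ i)) ^ 2) / cr (x i) (x (i + 1))
      = 4 * s ^ 2 * ∑ i ∈ Finset.range m, d i := by
    rw [Finset.mul_sum]
    refine Finset.sum_congr rfl fun i hi => ?_
    have hdi : d i ≠ 0 := (hpos i).ne'
    have e : (Real.cos (φ (i + 1)) - Real.cos (φ i)) ^ 2
      + (Real.sin (φ (i + 1)) - Real.sin (φ i)) ^ 2 = 4 * (s * d i) ^ 2 := by
      rw [← hst i (by simpa using hi), hφs]
      have c1 : Real.cos (2 * t i) = 1 - 2 * Real.sin (t i) ^ 2 := by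
        rw [Real.cos_two_mul, Real.cos_sq']; ring
      have c2 := Real.cos_sub (φ i + 2 * t i) (φ i)
      rw [add_sub_cancel_left, c1] at c2
      linear_combination Real.cos_sq_add_sin_sq (φ i + 2 * t i) + Real.cos_sq_add_sin_sq (φ i)
        + 2 * c2
    rw [e]
    change 4 * (s * d i) ^ 2 / d i = _
    field_simp
  rw [h4] at h3
  have h5 := sum_sin_le m n (by omega) hmn t (fun i hi => ⟨Real.arcsin_nonneg.2
    (mul_pos hs (hpos i)).le, (Real.arcsin_le_pi_div_two _).trans (by linarith [Real.pi_pos])⟩) hsum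
  rw [Finset.sum_congr rfl (fun i hi => hst i (by simpa using hi)), ← Finset.mul_sum] at h5
  have hD : 0 ≤ ∑ i ∈ Finset.range m, d i := Finset.sum_nonneg fun i _ => (hpos i).le
  calc _ ≤ (∑ i ∈ Finset.range m, d i) * (4 * s ^ 2 * ∑ i ∈ Finset.range m, d i) :=
        mul_le_mul_of_nonneg_left h3 hD
    _ = (2 * (s * ∑ i ∈ Finset.range m, d i)) ^ 2 := by ring
    _ ≤ (n * Real.sin (π / n)) ^ 2 := pow_le_pow_left₀ (by positivity) h5 2
    _ = _ := by ring

/-! ### Covering the polygon and its polar by triangles -/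

/-- The point `y` with `⟪p, y⟫ = ⟪q, y⟫ = 1`, for linearly independent `p` and `q`: the vertex of
the polar body dual to the edge from `p` to `q`. -/
def dualVertex (p q : E2) : E2 := !₂[(q 1 - p 1) / cr p q, (p 0 - q 0) / cr p q]

lemma inner_eq (p q : E2) : ⟪p, q⟫ = p 0 * q 0 + p 1 * q 1 := by
  simp [PiLp.inner_apply, Fin.sum_univ_two, mul_comm]

lemma inner_dualVertex (z p q : E2) :
    ⟪z, dualVertex p q⟫ = (cr z q + cr p z) / cr p q := by
  rw [inner_eq]
  simp [dualVertex, cr]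
  ring

lemma cr_dualVertex {p q r : E2} (h1 : 0 < cr p q) (h2 : 0 < cr q r) :
    cr (dualVertex p q) (dualVertex q r) =
      (cr p q + cr q r - cr p r) / (cr p q * cr q r) := by
  have h1' := h1.ne'
  have h2' := h2.ne'
  rw [cr.eq_1 (dualVertex p q)]
  simp only [dualVertex]
  simp
  field_simp
  simp only [cr]
  ring

/-- A point `z` of the polar body whose inner product with the vertices is largest at `q` lies in
the triangle spanned by the two polar vertices adjacent to `q`. -/
lemma mem_tri_dual {p q r z : E2} (h1 : 0 < cr p q) (h2 : 0 < cr q r)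
    (h3 : 0 < cr p q + cr q r - cr p r)
    (hp : ⟪p, z⟫ ≤ ⟪q, z⟫) (hr : ⟪r, z⟫ ≤ ⟪q, z⟫) (hq : ⟪q, z⟫ ≤ 1) :
    z ∈ tri (dualVertex p q) (dualVertex q r) := by
  set Λ := cr p q + cr q r - cr p r with hΛ
  have e : cr p q * (⟪q, z⟫ - ⟪r, z⟫) + cr q r * (⟪q, z⟫ - ⟪p, z⟫) = ⟪q, z⟫ * Λ := by
    simp only [hΛ, inner_eq, cr]; ring
  have h1' := h1.ne'
  have h2' := h2.ne'
  have h3' := h3.ne'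
  refine ⟨cr p q * (⟪q, z⟫ - ⟪r, z⟫) / Λ, cr q r * (⟪q, z⟫ - ⟪p, z⟫) / Λ,
    div_nonneg (mul_nonneg h1.le (by linarith)) h3.le,
    div_nonneg (mul_nonneg h2.le (by linarith)) h3.le, ?_, ?_⟩
  · rw [← add_div, e, mul_div_assoc, div_self h3.ne', mul_one]; exact hq
  · ext i
    fin_cases i
    · simp [dualVertex]
      field_simp
      simp only [hΛ, inner_eq, cr]; ring
    · simp [dualVertex]
      field_simp
      simp only [hΛ, inner_eq, cr]; ring

/-- A point `z` of the polygon whose inner product with the polar vertices is largest at the dual of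
the edge from `q` to `r` lies in the triangle over that edge. -/
lemma mem_tri_of_dual {p q r s z : E2} (h1 : 0 < cr p q) (h2 : 0 < cr q r) (h3 : 0 < cr r s)
    (h4 : 0 < cr p q + cr q r - cr p r) (h5 : 0 < cr q r + cr r s - cr q s)
    (hp : ⟪z, dualVertex p q⟫ ≤ ⟪z, dualVertex q r⟫)
    (hr : ⟪z, dualVertex r s⟫ ≤ ⟪z, dualVertex q r⟫) (hq : ⟪z, dualVertex q r⟫ ≤ 1) :
    z ∈ tri q r := by
  rw [inner_dualVertex] at *
  rw [inner_dualVertex] at hp hr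
  rw [div_le_div_iff₀ h1 h2] at hp
  rw [div_le_div_iff₀ h3 h2] at hr
  have e1 : (cr z r + cr q z) * cr p q - (cr z q + cr p z) * cr q r
      = cr q z * (cr p q + cr q r - cr p r) := by simp only [cr]; ring
  have e2 : (cr z r + cr q z) * cr r s - (cr z s + cr r z) * cr q r
      = cr z r * (cr q r + cr r s - cr q s) := by simp only [cr]; ring
  have hβ : 0 ≤ cr q z := by
    by_contra! h
    have := mul_neg_of_neg_of_pos h h4
    linarith
  have hα : 0 ≤ cr z r := by
    by_contra! h
    have := mul_neg_of_neg_of_pos h h5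
    linarith
  have h2' := h2.ne'
  refine ⟨cr z r / cr q r, cr q z / cr q r, div_nonneg hα h2.le, div_nonneg hβ h2.le,
    by rw [← add_div]; exact hq, ?_⟩
  ext i
  fin_cases i
  · simp
    field_simp
    simp only [cr]; ring
  · simp
    field_simp
    simp only [cr]; ring

/-- The maximum of a periodic function, attained at a positive index so that it has a left
neighbour. -/
lemma exists_max_periodic {m : ℕ} (hm : 0 < m) (f : ℕ → ℝ) (hf : Function.Periodic f m) :
    ∃ i, ∀ k, f k ≤ f (i + 1) := by
  obtain ⟨j, -, hmax⟩ := Finset.exists_max_image (Finset.range m) f ⟨0, by simpa using hm⟩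
  refine ⟨j + (m - 1), fun k => ?_⟩
  rw [show j + (m - 1) + 1 = j + m by omega, hf j, ← hf.map_mod_nat k]
  exact hmax _ (by simpa using Nat.mod_lt k hm)

lemma volume_le_of_subset {m : ℕ} (hm : 0 < m) (A : Set E2) (P : ℕ → E2)
    (hP : ∀ i, P (i + m) = -P i) (D : ℕ → ℝ) (hD0 : ∀ i, 0 ≤ D i)
    (hD : ∀ i, cr (P i) (P (i + 1)) = D i) (hA : ∀ z ∈ A, ∃ i, z ∈ tri (P i) (P (i + 1))) :
    volume A ≤ ENNReal.ofReal (∑ i ∈ Finset.range m, D i) := by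
  have hper : Function.Periodic P (2 * m) := by
    intro i
    rw [two_mul, ← add_assoc, hP, hP, neg_neg]
  have hDper : ∀ i, D (m + i) = D i := by
    intro i
    have h1 := hP i
    have h2 := hP (i + 1)
    rw [show i + 1 + m = i + m + 1 by ring] at h2
    rw [add_comm, ← hD, ← hD, h1, h2]; simp [cr]
  have hsub : A ⊆ ⋃ i ∈ Finset.range (2 * m), tri (P i) (P (i + 1)) := by
    intro z hz
    obtain ⟨i, hi⟩ := hA z hz
    have e1 := hper.map_mod_nat i
    have hQ : Function.Periodic (fun i => P (i + 1)) (2 * m) := by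
      intro j
      change P (j + 2 * m + 1) = P (j + 1)
      rw [show j + 2 * m + 1 = j + 1 + 2 * m by ring, hper]
    have e2 := hQ.map_mod_nat i
    simp only [Set.mem_iUnion]
    exact ⟨i % (2 * m), by simpa using Nat.mod_lt i (by omega), by
      change P (i % (2 * m) + 1) = P (i + 1) at e2
      rw [e1, e2]; exact hi⟩
  calc volume A ≤ _ := measure_mono hsub
    _ ≤ ∑ i ∈ Finset.range (2 * m), volume (tri (P i) (P (i + 1))) :=
        measure_biUnion_finset_le _ _
    _ = ∑ i ∈ Finset.range (2 * m), ENNReal.ofReal (D i / 2) := by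
        refine Finset.sum_congr rfl fun i _ => ?_
        rw [volume_tri, hD, abs_of_nonneg (hD0 i)]
    _ = ENNReal.ofReal (∑ i ∈ Finset.range m, D i) := by
        rw [← ENNReal.ofReal_sum_of_nonneg (fun i _ => by linarith [hD0 i]), two_mul,
          Finset.sum_range_add]
        simp only [hDper, ← Finset.sum_div]
        congr 1; ring

/-- The inequality for a polygon given by its vertices in counterclockwise order. -/
lemma volume_product_le (m n : ℕ) (hm : 2 ≤ m) (hmn : 2 * m ≤ n) (x : ℕ → E2)
    (hx : ∀ i, x (i + m) = -x i)
    (hpos : ∀ i, 0 < cr (x i) (x (i + 1))) (hpos0 : ∀ i, 0 < i → i < m → 0 < cr (x 0) (x i))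
    (hconv : ∀ i k, 2 ≤ k → k < 2 * m →
      cr (x (i + k)) (x (i + 1)) + cr (x i) (x (i + k)) < cr (x i) (x (i + 1)))
    (K : Set E2) (hK : K = convexHull ℝ (Set.range x)) :
    volume K * volume (polarBody K) ≤
      ENNReal.ofReal ((n : ℝ) ^ 2 * Real.sin (π / n) ^ 2) := by
  have hper : Function.Periodic x (2 * m) := by
    intro i
    rw [two_mul, ← add_assoc, hx, hx, neg_neg]
  set Y : ℕ → E2 := fun i => dualVertex (x i) (x (i + 1)) with hY
  have hYm : ∀ i, Y (i + m) = -Y i := by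
    intro i
    have h1 := hx i
    have h2 := hx (i + 1)
    rw [show i + 1 + m = i + m + 1 by ring] at h2
    simp only [hY, h1, h2]
    ext j
    fin_cases j <;> simp [dualVertex, cr] <;> ring
  have hYper : Function.Periodic Y (2 * m) := by
    intro i
    rw [two_mul, ← add_assoc, hYm, hYm, neg_neg]
  have hΛ : ∀ i, 0 < cr (x i) (x (i + 1)) + cr (x (i + 1)) (x (i + 2)) - cr (x i) (x (i + 2)) := by
    intro i
    have h := hconv i 2 le_rfl (by omega)
    have e : cr (x (i + 2)) (x (i + 1)) = - cr (x (i + 1)) (x (i + 2)) := by simp only [cr]; ring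
    linarith
  have hxK : ∀ i, x i ∈ K := fun i => hK ▸ subset_convexHull ℝ _ ⟨i, rfl⟩
  -- Every `Y i` lies in the polar body.
  have hYK : ∀ z ∈ K, ∀ i, ⟪z, Y i⟫ ≤ 1 := by
    intro z hz i
    have hsub : K ⊆ {z : E2 | ⟪z, Y i⟫ ≤ 1} := by
      rw [hK]
      refine convexHull_min ?_ ?_
      · rintro _ ⟨j, rfl⟩
        change ⟪x j, Y i⟫ ≤ 1
        obtain ⟨k, hk, hjk⟩ : ∃ k < 2 * m, x j = x (i + k) := by
          refine ⟨(j + (2 * m - 1) * i) % (2 * m), Nat.mod_lt _ (by omega), ?_⟩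
          have hp : Function.Periodic (fun k => x (i + k)) (2 * m) := by
            intro k
            change x (i + (k + 2 * m)) = x (i + k)
            rw [← add_assoc, hper]
          have e := hp.map_mod_nat (j + (2 * m - 1) * i)
          change x (i + _) = x (i + _) at e
          rw [e]
          obtain ⟨M, hM⟩ : ∃ M, 2 * m = M + 1 := ⟨2 * m - 1, by omega⟩
          rw [hM] at hper ⊢
          rw [show i + (j + (M + 1 - 1) * i) = j + i * (M + 1) by simp; ring]
          exact (hper.nat_mul i j).symm
        rw [hjk, inner_dualVertex, div_le_one (hpos i)]
        rcases Nat.lt_or_ge k 2 with h | h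
        · interval_cases k
          · simp [cr, mul_comm]
          · simp [cr, mul_comm]
        · exact (hconv i k h hk).le
      · have : {z : E2 | ⟪z, Y i⟫ ≤ 1} = {z : E2 | ⟪Y i, z⟫ ≤ 1} := by
          ext z; simp only [Set.mem_ofPred_eq, real_inner_comm]
        rw [this]
        exact convex_halfSpace_le (f := fun z => ⟪Y i, z⟫)
          ⟨fun a b => inner_add_right _ _ _, fun c a => by simp [inner_smul_right]⟩ 1
    exact hsub hz
  have hV := volume_le_of_subset (by omega : 0 < m) K x hx (fun i => cr (x i) (x (i + 1)))
    (fun i => (hpos i).le) (fun i => rfl) (by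
      intro z hz
      obtain ⟨i, hi⟩ := exists_max_periodic (by omega : 0 < 2 * m) (fun i => ⟪z, Y i⟫)
        (fun i => by simp only [hYper i])
      exact ⟨i + 1, mem_tri_of_dual (hpos i) (hpos (i + 1)) (hpos (i + 2)) (hΛ i) (hΛ (i + 1))
        (hi i) (hi (i + 2)) (hYK z hz _)⟩)
  have hV' := volume_le_of_subset (by omega : 0 < m) (polarBody K) Y hYm
    (fun i => (cr (x i) (x (i + 1)) + cr (x (i + 1)) (x (i + 2)) - cr (x i) (x (i + 2)))
        / (cr (x i) (x (i + 1)) * cr (x (i + 1)) (x (i + 2))))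
    (fun i => div_nonneg (hΛ i).le (mul_nonneg (hpos i).le (hpos (i + 1)).le))
    (fun i => cr_dualVertex (hpos i) (hpos (i + 1))) (by
      intro z hz
      obtain ⟨i, hi⟩ := exists_max_periodic (by omega : 0 < 2 * m) (fun i => ⟪x i, z⟫)
        (fun i => by simp only [hper i])
      exact ⟨i, mem_tri_dual (hpos i) (hpos (i + 1)) (hΛ i) (hi i) (hi (i + 2)) (hz _ (hxK _))⟩)
  calc _ ≤ _ := mul_le_mul' hV hV'
    _ = _ := (ENNReal.ofReal_mul (Finset.sum_nonneg fun i _ => (hpos i).le)).symm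
    _ ≤ _ := ENNReal.ofReal_le_ofReal (core_bound m n hm hmn x hx hpos hpos0)

/-! ### Ordering the vertices by angle -/

/-- A finite symmetric set with at most one point on each open ray from the origin can be listed in
counterclockwise order. The list is indexed by `ℕ` and keeps turning: `m` steps are half a turn, so
`x (i + m) = -x i`, and the angle `a` is lifted to `ℝ` so that it is strictly increasing. -/
lemma angular_order (X : Finset E2) (hne : X.Nonempty) (hneg : ∀ x ∈ X, -x ∈ X)
    (h0 : (0 : E2) ∉ X) (hray : ∀ x ∈ X, ∀ t : ℝ, 0 < t → t • x ∈ X → t • x = x) :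
    ∃ m : ℕ, 0 < m ∧ 2 * m ≤ X.card ∧ ∃ (x : ℕ → E2) (a ρ : ℕ → ℝ),
      (∀ i, x (i + m) = -x i) ∧ StrictMono a ∧ (∀ i, a (i + m) = a i + π) ∧
      (∀ i, 0 < ρ i) ∧ (∀ i, x i = ρ i • !₂[Real.cos (a i), Real.sin (a i)]) ∧
      Set.range x = (X : Set E2) := by
  classical
  -- `H` picks one point of each antipodal pair: the one with angle in `[0, π)`.
  set H : Finset E2 := X.filter (fun p => 0 < p 1 ∨ (p 1 = 0 ∧ 0 < p 0)) with hH
  set ang : E2 → ℝ := fun p => Complex.arg ⟨p 0, p 1⟩ with hang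
  set nrm : E2 → ℝ := fun p => ‖(⟨p 0, p 1⟩ : ℂ)‖ with hnrm
  have hpolar : ∀ p : E2, p = nrm p • !₂[Real.cos (ang p), Real.sin (ang p)] := by
    intro p
    ext i
    fin_cases i
    · simp only [PiLp.smul_apply, smul_eq_mul]
      exact (Complex.norm_mul_cos_arg ⟨p 0, p 1⟩).symm
    · simp only [PiLp.smul_apply, smul_eq_mul]
      exact (Complex.norm_mul_sin_arg ⟨p 0, p 1⟩).symm
  have hnpos : ∀ p ∈ X, 0 < nrm p := by
    intro p hp
    refine lt_of_le_of_ne (norm_nonneg _) fun h => ?_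
    have := hpolar p
    change 0 = nrm p at h
    rw [← h, zero_smul] at this
    exact h0 (this ▸ hp)
  have hcover : ∀ p ∈ X, p ∈ H ∨ -p ∈ H := by
    intro p hp
    simp only [hH, Finset.mem_filter, hp, hneg p hp, true_and, PiLp.neg_apply]
    rcases lt_trichotomy (p 1) 0 with h | h | h
    · right; left; linarith
    · rcases lt_trichotomy (p 0) 0 with h' | h' | h'
      · right; right; exact ⟨by linarith, by linarith⟩
      · exfalso
        apply h0
        have : p = 0 := by ext i; fin_cases i <;> simp [h, h']
        exact this ▸ hp
      · left; right; exact ⟨h, h'⟩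
    · left; left; exact h
  have hHX : H ⊆ X := Finset.filter_subset _ _
  have hinj : Set.InjOn ang (H : Set E2) := by
    intro p hp q hq hpq
    have hp' := hHX hp
    have hq' := hHX hq
    have e : q = (nrm q / nrm p) • p := by
      conv_rhs => arg 2; rw [hpolar p]
      rw [smul_smul, div_mul_cancel₀ _ (hnpos p hp').ne', hpq]
      exact hpolar q
    have := hray p hp' _ (div_pos (hnpos q hq') (hnpos p hp')) (e ▸ hq')
    rw [← e] at this
    exact this.symm
  have hrange : ∀ p ∈ H, 0 ≤ ang p ∧ ang p < π := by
    intro p hp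
    have h := (Finset.mem_filter.1 hp).2
    refine ⟨Complex.arg_nonneg_iff.2 ?_, lt_of_le_of_ne (Complex.arg_le_pi _) fun h' => ?_⟩
    · change 0 ≤ p 1
      rcases h with h | h
      · exact h.le
      · exact h.1.ge
    · obtain ⟨h1, h2⟩ := Complex.arg_eq_pi_iff.1 h'
      change p 0 < 0 at h1
      change p 1 = 0 at h2
      rcases h with h | h <;> linarith
  set m := (H.image ang).card with hm
  have hcard : m = H.card := Finset.card_image_of_injOn hinj
  have hHne : H.Nonempty := by
    obtain ⟨p, hp⟩ := hne
    rcases hcover p hp with h | h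
    · exact ⟨_, h⟩
    · exact ⟨_, h⟩
  have hm0 : 0 < m := by rw [hcard]; exact hHne.card_pos
  have h2m : 2 * m ≤ X.card := by
    have hdisj : Disjoint H (H.image Neg.neg) := by
      rw [Finset.disjoint_left]
      intro p hp hp'
      obtain ⟨q, hq, rfl⟩ := Finset.mem_image.1 hp'
      have h1 := (Finset.mem_filter.1 hp).2
      have h2 := (Finset.mem_filter.1 hq).2
      simp only [PiLp.neg_apply] at h1
      rcases h1 with h1 | h1 <;> rcases h2 with h2 | h2 <;> linarith
    have hsub : H ∪ H.image Neg.neg ⊆ X := by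
      refine Finset.union_subset hHX ?_
      intro p hp
      obtain ⟨q, hq, rfl⟩ := Finset.mem_image.1 hp
      exact hneg q (hHX hq)
    have := Finset.card_le_card hsub
    rw [Finset.card_union_of_disjoint hdisj, Finset.card_image_of_injective _ neg_injective] at this
    omega
  set g : Fin m ↪o ℝ := (H.image ang).orderEmbOfFin rfl with hg
  have hgmem : ∀ j, ∃ p ∈ H, ang p = g j := fun j =>
    Finset.mem_image.1 (Finset.orderEmbOfFin_mem _ _ j)
  choose pt hptH hpt using hgmem
  have hptsurj : ∀ p ∈ H, ∃ j, pt j = p := by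
    intro p hp
    have : ang p ∈ Set.range g := by
      rw [hg, Finset.range_orderEmbOfFin]
      exact_mod_cast Finset.mem_image_of_mem ang hp
    obtain ⟨j, hj⟩ := this
    exact ⟨j, hinj (hptH j) hp (by rw [hpt, hj])⟩
  set r : ℕ → Fin m := fun i => ⟨i % m, Nat.mod_lt i hm0⟩ with hr
  have hrm : ∀ i, r (i + m) = r i := fun i => by simp [hr]
  have hdm : ∀ i, (i + m) / m = i / m + 1 := fun i => Nat.add_div_right i hm0
  refine ⟨m, hm0, h2m, fun i => (-1 : ℝ) ^ (i / m) • pt (r i), fun i => g (r i) + π * (i / m : ℕ),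
    fun i => nrm (pt (r i)), ?_, ?_, ?_, fun i => hnpos _ (hHX (hptH _)), ?_, ?_⟩
  · intro i
    simp only [hrm, hdm, pow_succ, mul_neg, mul_one, neg_smul]
  · refine strictMono_nat_of_lt_succ fun i => ?_
    have hlt := Nat.mod_lt i hm0
    rcases Nat.lt_or_ge (i % m + 1) m with h | h
    · have e1 : (i + 1) / m = i / m := by
        rw [Nat.div_eq_iff hm0]
        have h1 := Nat.div_add_mod i m
        rw [mul_comm] at h1
        omega
      have e2 : (i + 1) % m = i % m + 1 := by
        have h1 := Nat.div_add_mod i m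
        have h2 := Nat.div_add_mod (i + 1) m
        rw [e1] at h2; omega
      have : g (r i) < g (r (i + 1)) := g.strictMono (by
        rw [Fin.lt_def]; simp only [hr, e2]; omega)
      simp only [e1]; linarith
    · have e1 : (i + 1) / m = i / m + 1 := by
        have : i + 1 = m * (i / m + 1) := by
          have := Nat.div_add_mod i m
          rw [mul_add, mul_one]; omega
        rw [this, Nat.mul_div_cancel_left _ hm0]
      have h1 := hrange _ (hptH (r i))
      have h2 := hrange _ (hptH (r (i + 1)))
      rw [hpt] at h1 h2
      simp only [e1]; push_cast
      linarith [h1.2, h2.1]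
  · intro i
    simp only [hrm, hdm]; push_cast; ring
  · intro i
    have h := hpolar (pt (r i))
    rw [hpt] at h
    have hs : Real.sin (g (r i) + π * (i / m : ℕ)) = (-1) ^ (i / m) * Real.sin (g (r i)) := by
      rw [mul_comm π, Real.sin_add_nat_mul_pi]
    have hc : Real.cos (g (r i) + π * (i / m : ℕ)) = (-1) ^ (i / m) * Real.cos (g (r i)) := by
      rw [mul_comm π, Real.cos_add_nat_mul_pi]
    simp only [hs, hc]
    conv_lhs => rw [h]
    ext j
    fin_cases j <;> simp <;> ring
  · ext p
    constructor
    · rintro ⟨i, rfl⟩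
      have h := hHX (hptH (r i))
      rcases neg_one_pow_eq_or ℝ (i / m) with e | e
      · simpa only [e, one_smul, Finset.mem_coe] using h
      · simpa only [e, neg_smul, one_smul, Finset.mem_coe] using hneg _ h
    · intro hp
      rcases hcover p hp with h | h
      · obtain ⟨j, hj⟩ := hptsurj p h
        refine ⟨j, ?_⟩
        have e : r j = j := by simp [hr, Nat.mod_eq_of_lt j.2]
        simp [e, hj, Nat.div_eq_of_lt j.2]
      · obtain ⟨j, hj⟩ := hptsurj _ h
        refine ⟨j + m, ?_⟩
        have e : r j = j := by simp [hr, Nat.mod_eq_of_lt j.2]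
        simp only [hrm, hdm, e, hj, Nat.div_eq_of_lt j.2]
        simp

lemma combo_mem {C : Set E2} (hC : Convex ℝ C) (h0 : (0 : E2) ∈ C) {p q : E2} (hp : p ∈ C)
    (hq : q ∈ C) {α β : ℝ} (hα : 0 ≤ α) (hβ : 0 ≤ β) (h : α + β ≤ 1) : α • p + β • q ∈ C := by
  rcases eq_or_lt_of_le (add_nonneg hα hβ) with h' | h'
  · have e1 : α = 0 := by linarith
    have e2 : β = 0 := by linarith
    simpa [e1, e2] using h0
  · have h1 := hC hp hq (div_nonneg hα h'.le) (div_nonneg hβ h'.le)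
      (by rw [← add_div, div_self h'.ne'])
    have h2 := hC.smul_mem_of_zero_mem h0 h1 ⟨h'.le, h⟩
    rwa [smul_add, smul_smul, smul_smul, mul_div_cancel₀ _ h'.ne', mul_div_cancel₀ _ h'.ne'] at h2

/-- The extreme points of a symmetric polygon, listed counterclockwise. The fourth property of `x`
says that every vertex other than `x i` and `x (i + 1)` lies strictly on the inner side of the line
through these two: otherwise one of `x i`, `x (i + 1)` would be a convex combination of the other
one, that vertex and the origin. -/
lemma exists_vertices (n : ℕ) (S : Finset E2) (hScard : S.card ≤ n)
    (K : Set E2) (hK : K = convexHull ℝ (S : Set E2))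
    (hsym : K = -K) (h0 : (0 : E2) ∈ interior K) :
    ∃ m : ℕ, 2 ≤ m ∧ 2 * m ≤ n ∧ ∃ x : ℕ → E2, (∀ i, x (i + m) = -x i) ∧
      (∀ i, 0 < cr (x i) (x (i + 1))) ∧ (∀ i, 0 < i → i < m → 0 < cr (x 0) (x i)) ∧
      (∀ i k, 2 ≤ k → k < 2 * m →
        cr (x (i + k)) (x (i + 1)) + cr (x i) (x (i + k)) < cr (x i) (x (i + 1))) ∧
      K = convexHull ℝ (Set.range x) := by
  classical
  have hKc : Convex ℝ K := hK ▸ convex_convexHull ℝ _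
  have hKcpt : IsCompact K := hK ▸ S.finite_toSet.isCompact_convexHull ℝ
  have h0K : (0 : E2) ∈ K := interior_subset h0
  have hnegK : ∀ p ∈ K, -p ∈ K := fun p hp => by rw [hsym] at hp; exact hp
  have hextS : Set.extremePoints ℝ K ⊆ S := hK ▸ extremePoints_convexHull_subset
  have hfin : (Set.extremePoints ℝ K).Finite := S.finite_toSet.subset hextS
  set X : Finset E2 := hfin.toFinset with hX
  have hXe : ∀ p, p ∈ X ↔ p ∈ Set.extremePoints ℝ K := fun p => hfin.mem_toFinset
  have hXcoe : (X : Set E2) = Set.extremePoints ℝ K := hfin.coe_toFinset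
  have hXcard : X.card ≤ n := (Finset.card_le_card fun p hp => by
    exact_mod_cast hextS ((hXe p).1 hp)).trans hScard
  have hKX : K = convexHull ℝ (X : Set E2) := by
    rw [hXcoe, ← (hfin.isCompact_convexHull ℝ).isClosed.closure_eq,
      closure_convexHull_extremePoints hKcpt hKc]
  have hXK : ∀ p ∈ X, p ∈ K := fun p hp => ((hXe p).1 hp).1
  have hdiff : ∀ p ∈ X, Convex ℝ (K \ {p}) := fun p hp =>
    (hKc.mem_extremePoints_iff_convex_sdiff.1 ((hXe p).1 hp)).2
  -- No nonzero linear functional vanishes on `K`.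
  have hbig : ∀ a b : ℝ, (∀ z ∈ K, a * z 0 + b * z 1 = 0) → a = 0 ∧ b = 0 := by
    intro a b hab
    have hc : Filter.Tendsto (fun t : ℝ => t • (!₂[a, b] : E2)) (nhds 0) (nhds 0) := by
      have : Continuous fun t : ℝ => t • (!₂[a, b] : E2) := by fun_prop
      simpa using this.tendsto 0
    have hev : ∀ᶠ t in nhds (0 : ℝ), t • (!₂[a, b] : E2) ∈ K :=
      hc.eventually (mem_interior_iff_mem_nhds.1 h0)
    obtain ⟨ε, hε, hball⟩ := Metric.eventually_nhds_iff.1 hev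
    have h := hab _ (hball (show dist (ε / 2) 0 < ε by
      rw [Real.dist_eq, sub_zero, abs_of_pos (by positivity)]; linarith))
    simp at h
    have h' : ε / 2 * (a ^ 2 + b ^ 2) = 0 := by linear_combination h
    have h'' : a ^ 2 + b ^ 2 = 0 := by
      rcases mul_eq_zero.1 h' with h | h
      · linarith
      · exact h
    constructor <;> nlinarith [sq_nonneg a, sq_nonneg b]
  have hXne : X.Nonempty := by
    rw [Finset.nonempty_iff_ne_empty]
    intro h
    rw [h] at hKX
    simp at hKX
    rw [hKX] at h0K
    exact h0K
  have h0X : (0 : E2) ∉ X := by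
    intro h
    have hz : ∀ z ∈ K, z = 0 := by
      intro z hz
      by_contra hne
      have h1 : z ∈ K \ {0} := ⟨hz, hne⟩
      have h2 : -z ∈ K \ {0} := ⟨hnegK z hz, by simpa using hne⟩
      have := hdiff 0 h h1 h2 (a := 1 / 2) (b := 1 / 2) (by norm_num) (by norm_num) (by norm_num)
      simp at this
    have := (hbig 1 0 (fun z h => by simp [hz z h])).1
    norm_num at this
  have hXneg : ∀ p ∈ X, -p ∈ X := by
    intro p hp
    rw [hXe, hKc.mem_extremePoints_iff_convex_sdiff]
    refine ⟨hnegK p (hXK p hp), ?_⟩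
    have : K \ {-p} = -(K \ {p}) := by
      ext z
      simp only [Set.mem_sdiff, Set.mem_singleton_iff, Set.mem_neg]
      constructor
      · rintro ⟨h1, h2⟩
        exact ⟨hnegK z h1, fun h => h2 (by rw [← h, neg_neg])⟩
      · rintro ⟨h1, h2⟩
        exact ⟨by simpa using hnegK _ h1, fun h => h2 (by rw [h, neg_neg])⟩
    rw [this]
    exact (hdiff p hp).neg
  have hne0 : ∀ p ∈ X, (0 : E2) ∈ K \ {p} := fun p hp =>
    ⟨h0K, fun h => h0X (by rw [Set.mem_singleton_iff] at h; rwa [h])⟩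
  have hle : ∀ p ∈ X, ∀ t : ℝ, 0 < t → t ≤ 1 → t • p ∈ X → t • p = p := by
    intro p hp t ht ht1 htp
    by_contra hne
    have h := (hdiff _ htp).smul_mem_of_zero_mem (hne0 _ htp)
      (show p ∈ K \ {t • p} from ⟨hXK p hp, fun h => hne (by simpa using h.symm)⟩)
      ⟨ht.le, ht1⟩
    exact h.2 rfl
  have hray : ∀ p ∈ X, ∀ t : ℝ, 0 < t → t • p ∈ X → t • p = p := by
    intro p hp t ht htp
    rcases le_total t 1 with h | h
    · exact hle p hp t ht h htp
    · have e : t⁻¹ • t • p = p := by rw [smul_smul, inv_mul_cancel₀ ht.ne', one_smul]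
      have := hle _ htp t⁻¹ (inv_pos.2 ht) (inv_le_one_of_one_le₀ h) (by rwa [e])
      rw [e] at this
      exact this.symm
  obtain ⟨m, hm0, h2m, x, a, ρ, hxm, ha, ham, hρ, hxa, hrange⟩ :=
    angular_order X hXne hXneg h0X hray
  have hxX : ∀ i, x i ∈ X := fun i => by
    have : x i ∈ (X : Set E2) := hrange ▸ ⟨i, rfl⟩
    exact_mod_cast this
  have hcr : ∀ i j, cr (x i) (x j) = ρ i * ρ j * Real.sin (a j - a i) := by
    intro i j
    rw [hxa i, hxa j, Real.sin_sub]
    simp [cr]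
    ring
  have hcrpos : ∀ i j, i < j → j < i + m → 0 < cr (x i) (x j) := by
    intro i j hij hj
    rw [hcr]
    have h1 := ha hij
    have h2 := ha hj
    rw [ham] at h2
    exact mul_pos (mul_pos (hρ i) (hρ j)) (Real.sin_pos_of_pos_of_lt_pi (by linarith) (by linarith))
  have hm2 : 2 ≤ m := by
    by_contra! hlt
    have hm1 : m = 1 := by omega
    subst hm1
    have hz : ∀ i, cr (x 0) (x i) = 0 := by
      intro i
      induction i with
      | zero => simp [cr, mul_comm]
      | succ i ih =>
        rw [hxm i]
        simp only [cr, PiLp.neg_apply] at ih ⊢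
        linarith
    have hsub : K ⊆ {z : E2 | -(x 0 1) * z 0 + x 0 0 * z 1 = 0} := by
      rw [hKX, ← hrange]
      refine convexHull_min ?_ ?_
      · rintro _ ⟨i, rfl⟩
        have := hz i
        simp only [cr] at this
        change -(x 0 1) * x i 0 + x 0 0 * x i 1 = 0
        linarith
      · exact convex_hyperplane (f := fun z : E2 => -(x 0 1) * z 0 + x 0 0 * z 1)
          ⟨fun p q => by simp; ring, fun c p => by simp; ring⟩ 0
    obtain ⟨h1, h2⟩ := hbig _ _ hsub
    apply h0X
    have : x 0 = 0 := by
      ext i; fin_cases i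
      · simpa using h2
      · simpa using h1
    exact this ▸ hxX 0
  have hpos : ∀ i, 0 < cr (x i) (x (i + 1)) := fun i => hcrpos i (i + 1) (by omega) (by omega)
  refine ⟨m, hm2, h2m.trans hXcard, x, hxm, hpos, fun i h1 h2 => hcrpos 0 i h1 (by omega), ?_,
    by rw [hrange]; exact hKX⟩
  intro i k hk2 hk
  set p := x i with hp
  set q := x (i + 1) with hq
  set z := x (i + k) with hzz
  have hd : 0 < cr p q := hpos i
  have hdecomp : cr p q • z = cr z q • p + cr p z • q := by
    ext j
    fin_cases j <;> simp [cr] <;> ring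
  by_contra! hcon
  have hanti : ∀ u v : E2, cr u v = - cr v u := fun u v => by simp only [cr]; ring
  -- `z` is outside the cone spanned by the consecutive vertices `p` and `q`
  have hcone : cr p z < 0 ∨ cr z q < 0 := by
    rcases Nat.lt_or_ge (i + m) (i + k) with h | h
    · left
      have h1 := hcrpos (i + m) (i + k) h (by omega)
      rw [hxm i] at h1
      simp only [cr, PiLp.neg_apply] at h1 ⊢
      linarith
    · right
      have h1 := hcrpos (i + 1) (i + k) (by omega) (by omega)
      rw [hanti]; linarith
  -- If `z = s • u + t • w` with `s < 0` and `1 ≤ s + t`, then `w` is a convex combination of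
  -- `z`, `u` and `0`, all different from `w`, so `w` is not extreme.
  have hmain : ∀ u w : E2, u ∈ X → w ∈ X → cr u w ≠ 0 → ∀ s t : ℝ, s < 0 → cr z w ≠ 0 →
      z = s • u + t • w → 1 ≤ s + t → False := by
    intro u w hu hw hne s t hs hzw he hst
    have ht0 : 0 < t := by linarith
    have hu' : u ∈ K \ {w} := ⟨hXK u hu, fun h => hne (by
      rw [Set.mem_singleton_iff.1 h]; simp [cr, mul_comm])⟩
    have hz' : z ∈ K \ {w} := ⟨hXK z (hxX _), fun h => hzw (by
      rw [Set.mem_singleton_iff.1 h]; simp [cr, mul_comm])⟩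
    have h := combo_mem (hdiff w hw) (hne0 w hw) hz' hu' (α := 1 / t) (β := -s / t)
      (by positivity) (div_nonneg (by linarith) ht0.le)
      (by rw [← add_div, div_le_one ht0]; linarith)
    apply h.2
    rw [Set.mem_singleton_iff, he]
    ext j
    simp
    field_simp
    ring
  have hz1 : z = (cr z q / cr p q) • p + (cr p z / cr p q) • q := by
    have := congrArg (fun v => (cr p q)⁻¹ • v) hdecomp
    simp only [smul_add, smul_smul, inv_mul_cancel₀ hd.ne', one_smul] at this
    rw [div_eq_inv_mul, div_eq_inv_mul]; exact this
  have hsum : 1 ≤ cr z q / cr p q + cr p z / cr p q := by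
    rw [← add_div, one_le_div hd]; exact hcon
  rcases hcone with h | h
  · have h2 : 0 < cr z q := by linarith
    refine hmain q p (hxX _) (hxX _) (by rw [hanti]; linarith) _ _ (div_neg_of_neg_of_pos h hd)
      (by rw [hanti]; linarith) (by rw [add_comm]; exact hz1)
      (by rw [add_comm]; exact hsum)
  · exact hmain p q (hxX _) (hxX _) hd.ne' _ _ (div_neg_of_neg_of_pos h hd)
      h.ne hz1 hsum

/-- Blaschke–Santaló inequality for o-symmetric polygons with at most n vertices. -/
theorem polygonal_blaschke_santalo_sym
    (n : ℕ) (hn6 : 6 ≤ n) (hneven : Even n)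
    (S : Finset E2) (hScard : S.card ≤ n)
    (K : Set E2) (hK : K = convexHull ℝ (S : Set E2))
    (hsym : K = -K) (h0 : (0 : E2) ∈ interior K) :
    volume K * volume (polarBody K) ≤
      ENNReal.ofReal ((n : ℝ) ^ 2 * Real.sin (π / n) ^ 2) := by
  obtain ⟨m, hm, hmn, x, hx, hpos, hpos0, hconv, hKx⟩ := exists_vertices n S hScard K hK hsym h0
  exact volume_product_le m n hm hmn x hx hpos hpos0 hconv K hKx
end
end

section
/- Let n ≥ 6 be an even integer and let K ⊂ ℝ² be an o-symmetric convex polygon with exactly n vertices and o in its interior that maximizes the volume product, i.e. V(L)·V(L*) ≤ V(K)·V(K*) for every o-symmetric convex polygon L with at most n vertices and o in its interior. If x₁, x₂, x₃ are three consecutive vertices of K (in counterclockwise order), then o, (x₁+x₃)/2 and x₂ are collinear; equivalently, x₂ is a scalar multiple of x₁+x₃. -/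
/-!
The vertex `x₂` is slid (together with `-x₂`) parallel to `x₁x₃`, to `x₂ + t(x₃ - x₁)`.  This does not
decrease the area of the polygon, so by maximality the area of the polar body has a maximum at
`t = 0`; the vanishing of its derivative there is the claimed collinearity.

* Let `a` and `b` be the vertices of the polar body that correspond to the edges `x₁x₂` and `x₂x₃`
  (`exists_support`); they are linearly independent.  Put `⟪x₁, b⟫ = 1 - A` and `⟪x₃, a⟫ = 1 - B`, with
  `A, B > 0`.  The functional `A • a + B • b` takes the value `A + B - AB` at `x₁` and `x₃` and is at most
  that at every vertex other than `x₂`, so the line `x₁x₃` cuts the triangle `x₁x₂x₃` off the polygon.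
  Shearing that triangle (and its reflection) has determinant one and maps the polygon into the
  perturbed one: `volume_le_perturbed`.
* Writing points of the plane as `s • (a + w • (b - a))` gives, for a symmetric body with support
  function `h`, that the area of the polar is a constant times `∫ h(a + w(b - a))⁻² dw`: `polar_area`.
  The edge of the polar body dual to `x₂` is `0 ≤ w ≤ 1`; there, and only there, `x₂` determines `h`.
* Differentiating under the integral sign (`deriv_part`), the derivative of that integral at `t = 0` is
  `-(⟪u, a⟫ + ⟪u, b⟫)` with `u = x₃ - x₁`.  Its vanishing says `A = B`, that is, `x₁ + x₃ = (2 - A) • x₂`.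
-/

open MeasureTheory Real
open scoped Pointwise RealInnerProductSpace ENNReal

noncomputable section

/-! ### Area of the polar body as an integral over directions -/

lemma lintegral_abs_strip (h : ℝ) (hh : 0 < h) :
    ∫⁻ s : ℝ, ENNReal.ofReal |s| * Set.indicator {s : ℝ | |s| * h ≤ 1} 1 s
      = ENNReal.ofReal (h⁻¹ ^ 2) := by
  have hset : {s : ℝ | |s| * h ≤ 1} = Set.Icc (-h⁻¹) h⁻¹ := by
    ext s
    rw [Set.mem_ofPred_eq, Set.mem_Icc, ← abs_le, ← one_div, le_div_iff₀ hh]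
  have hr : 0 < h⁻¹ := inv_pos.2 hh
  generalize h⁻¹ = r at hset hr
  rw [hset]
  have h1 : ∀ s : ℝ, ENNReal.ofReal |s| * Set.indicator (Set.Icc (-r) r) 1 s
      = Set.indicator (Set.Icc (-r) r) (fun s => ENNReal.ofReal |s|) s := by
    intro s
    by_cases hs : s ∈ Set.Icc (-r) r <;> simp [hs]
  simp_rw [h1]
  rw [lintegral_indicator measurableSet_Icc, ← ofReal_integral_eq_lintegral_ofReal]
  · congr 1
    rw [integral_Icc_eq_integral_Ioc, ← intervalIntegral.integral_of_le (by linarith),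
      ← intervalIntegral.integral_add_adjacent_intervals (b := 0)
        (continuous_abs.intervalIntegrable _ _) (continuous_abs.intervalIntegrable _ _)]
    have e1 : ∫ s in (-r)..0, |s| = ∫ s in (-r)..0, -s := by
      apply intervalIntegral.integral_congr
      intro s hs
      rw [Set.uIcc_of_le (by linarith)] at hs
      exact abs_of_nonpos hs.2
    have e2 : ∫ s in (0 : ℝ)..r, |s| = ∫ s in (0 : ℝ)..r, s := by
      apply intervalIntegral.integral_congr
      intro s hs
      rw [Set.uIcc_of_le hr.le] at hs
      exact abs_of_nonneg hs.1
    rw [e1, e2, intervalIntegral.integral_neg, integral_id, integral_id]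
    ring
  · exact continuous_abs.continuousOn.integrableOn_Icc
  · exact Filter.Eventually.of_forall fun s => abs_nonneg s

lemma lintegral_scale (f : ℝ → ℝ≥0∞) (hf : Measurable f) (s : ℝ) (hs : s ≠ 0) :
    ∫⁻ p, f p = ENNReal.ofReal |s| * ∫⁻ w, f (s * w) := by
  conv_lhs => rw [← Real.smul_map_volume_mul_left hs]
  rw [lintegral_smul_measure, lintegral_map hf (measurable_const_mul s), smul_eq_mul]

/-- The area of the unit ball of an absolutely homogeneous `N` on `ℝ × ℝ`, in the coordinates
`(s * w, s)`, whose Jacobian is `|s|`. -/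
lemma volume_unit_ball_prod (N : ℝ × ℝ → ℝ) (hN : Measurable N)
    (hhom : ∀ s w : ℝ, N (s * w, s) = |s| * N (w, 1)) (hpos : ∀ w, 0 < N (w, 1)) :
    volume {z | N z ≤ 1} = ∫⁻ w, ENNReal.ofReal ((N (w, 1))⁻¹ ^ 2) := by
  have hM : MeasurableSet {z | N z ≤ 1} := measurableSet_le hN measurable_const
  have hind : Measurable (Set.indicator {z | N z ≤ 1} (1 : ℝ × ℝ → ℝ≥0∞)) :=
    measurable_one.indicator hM
  rw [← lintegral_indicator_one hM, Measure.volume_eq_prod, lintegral_prod_symm _ hind.aemeasurable]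
  have h1 : ∀ᵐ s : ℝ, ∫⁻ p, Set.indicator {z | N z ≤ 1} (1 : ℝ × ℝ → ℝ≥0∞) (p, s)
      = ∫⁻ w, ENNReal.ofReal |s| *
        Set.indicator {z | N z ≤ 1} (1 : ℝ × ℝ → ℝ≥0∞) (s * w, s) := by
    filter_upwards [Measure.ae_ne volume (0 : ℝ)] with s hs
    rw [lintegral_scale (fun p => Set.indicator {z | N z ≤ 1} (1 : ℝ × ℝ → ℝ≥0∞) (p, s))
      (by fun_prop) s hs, lintegral_const_mul]
    fun_prop
  rw [lintegral_congr_ae h1, lintegral_lintegral_swap]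
  · apply lintegral_congr
    intro w
    rw [← lintegral_abs_strip _ (hpos w)]
    apply lintegral_congr
    intro s
    congr 1
    simp only [Set.indicator, Set.mem_ofPred_eq, hhom, Pi.one_apply]
  · apply Measurable.aemeasurable
    simp only [Function.uncurry_def]
    fun_prop

/-- The area of the unit ball `{N ≤ 1}` of an absolutely homogeneous `N`, as an integral along the line
through two linearly independent points `a` and `b`.  The constant `D` depends on `a` and `b` only. -/
lemma polar_area (a b : E2) (hab : a 0 * b 1 - a 1 * b 0 ≠ 0) :
    ∃ D : ℝ≥0∞, D ≠ 0 ∧ D ≠ ∞ ∧ ∀ N : E2 → ℝ, Continuous N →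
      (∀ (s : ℝ) y, N (s • y) = |s| * N y) → (∀ w : ℝ, 0 < N (a + w • (b - a))) →
      volume {y | N y ≤ 1} = D * ∫⁻ w : ℝ, ENNReal.ofReal ((N (a + w • (b - a)))⁻¹ ^ 2) := by
  let f : ℝ × ℝ →ₗ[ℝ] E2 :=
    (LinearMap.fst ℝ ℝ ℝ).smulRight (b - a) + (LinearMap.snd ℝ ℝ ℝ).smulRight a
  have hf : ∀ z, f z = z.1 • (b - a) + z.2 • a := fun z => by simp [f]
  have hinj : Function.Injective f := by
    rw [← LinearMap.ker_eq_bot, LinearMap.ker_eq_bot']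
    rintro ⟨p, s⟩ h
    rw [hf] at h
    have h0 := congrArg (fun y : E2 => y 0) h
    have h1 := congrArg (fun y : E2 => y 1) h
    simp at h0 h1
    have hp : p * (a 0 * b 1 - a 1 * b 0) = 0 := by linear_combination a 0 * h1 - a 1 * h0
    have hs : s * (a 0 * b 1 - a 1 * b 0) = 0 := by
      linear_combination (b 1 - a 1) * h0 - (b 0 - a 0) * h1
    simp [hab] at hp hs
    simp [hp, hs]
  let Φ : (ℝ × ℝ) ≃L[ℝ] E2 :=
    (LinearMap.linearEquivOfInjective f hinj (by simp)).toContinuousLinearEquiv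
  have hΦ : ∀ z, Φ z = z.1 • (b - a) + z.2 • a := fun z => hf z
  have : (Measure.map Φ (volume : Measure (ℝ × ℝ))).IsAddHaarMeasure :=
    Φ.isAddHaarMeasure_map _
  refine ⟨Measure.addHaarScalarFactor (volume : Measure E2) (Measure.map Φ volume), ?_, by simp, ?_⟩
  · have := Measure.addHaarScalarFactor_pos_of_isAddHaarMeasure (volume : Measure E2)
      (Measure.map Φ volume)
    simpa using this.ne'
  · intro N hN hhom hpos
    have hmeas : MeasurableSet {y | N y ≤ 1} := measurableSet_le hN.measurable measurable_const
    have hv := volume_unit_ball_prod (fun z => N (Φ z)) (hN.comp Φ.continuous).measurable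
      (fun s w => by
        rw [← hhom]; congr 1; simp only [hΦ]; module)
      (fun w => by
        have := hpos w
        simp only [hΦ]; convert this using 2; module)
    conv_lhs => rw [Measure.isAddLeftInvariant_eq_smul (volume : Measure E2) (Measure.map Φ volume)]
    rw [Measure.smul_apply, Measure.map_apply Φ.continuous.measurable hmeas]
    have : Φ ⁻¹' {y | N y ≤ 1} = {z | N (Φ z) ≤ 1} := rfl
    rw [this, hv, ENNReal.smul_def, smul_eq_mul]
    congr 1
    apply lintegral_congr
    intro w
    simp only [hΦ]
    congr 4
    module

/-! ### Differentiating the polar area -/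

lemma abs_inv_sq_sub_le {p q m : ℝ} (hm : 0 < m) (hp : m ≤ p) (hq : m ≤ q) :
    |p⁻¹ ^ 2 - q⁻¹ ^ 2| ≤ 2 * m⁻¹ ^ 3 * |p - q| := by
  have hp0 : 0 < p := hm.trans_le hp
  have hq0 : 0 < q := hm.trans_le hq
  have e : p⁻¹ ^ 2 - q⁻¹ ^ 2 = (q - p) * (p⁻¹ * q⁻¹ * (p⁻¹ + q⁻¹)) := by
    field_simp; ring
  have h1 : p⁻¹ ≤ m⁻¹ := inv_anti₀ hm hp
  have h2 : q⁻¹ ≤ m⁻¹ := inv_anti₀ hm hq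
  have hpi : 0 < p⁻¹ := inv_pos.2 hp0
  have hqi : 0 < q⁻¹ := inv_pos.2 hq0
  have hmi : 0 < m⁻¹ := inv_pos.2 hm
  rw [e, abs_mul, abs_sub_comm q p, abs_of_pos (a := p⁻¹ * q⁻¹ * (p⁻¹ + q⁻¹)) (by positivity), mul_comm]
  apply mul_le_mul_of_nonneg_right _ (abs_nonneg _)
  calc p⁻¹ * q⁻¹ * (p⁻¹ + q⁻¹) ≤ m⁻¹ * m⁻¹ * (m⁻¹ + m⁻¹) := by gcongr
    _ = _ := by ring

/-- Differentiation under the integral sign.  On `(0, 1)` the affine term exceeds `α` at `t = 0`, and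
outside `[0, 1]` it is below `α`, so the integrand has derivative `-2 (g₀ + w (g₁ - g₀))` on `(0, 1)` and
`0` off `[0, 1]`.  The two linear lower bounds for `α` provide integrability at infinity. -/
lemma deriv_part (A B g₀ g₁ : ℝ) (hA : 0 < A) (hB : 0 < B) (α : ℝ → ℝ) (hα : Continuous α)
    (hα1 : ∀ w, 1 - A * w ≤ α w) (hα2 : ∀ w, 1 - B + B * w ≤ α w)
    (hα3 : ∀ w, 0 < w → w < 1 → α w < 1) :
    (∀ᶠ t in nhds (0 : ℝ), (∀ w, 0 < max (α w) |1 + t * (g₀ + w * (g₁ - g₀))|) ∧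
      Integrable (fun w => (max (α w) |1 + t * (g₀ + w * (g₁ - g₀))|)⁻¹ ^ 2)) ∧
    HasDerivAt (fun t : ℝ => ∫ w, (max (α w) |1 + t * (g₀ + w * (g₁ - g₀))|)⁻¹ ^ 2)
      (-(g₀ + g₁)) 0 := by
  set g : ℝ → ℝ := fun w => g₀ + w * (g₁ - g₀) with hg
  have hgc : Continuous g := by fun_prop
  set M : ℝ := |g₀| + |g₁| + 1 with hM
  have hM0 : 0 < M := by positivity
  have hgM : ∀ w, |g w| ≤ M * (1 + |w|) := by
    intro w
    have h1 : |g w| ≤ |g₀| + |w| * |g₁ - g₀| := by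
      rw [← abs_mul]; exact abs_add_le _ _
    have h2 : |g₁ - g₀| ≤ |g₁| + |g₀| := abs_sub _ _
    have h3 := mul_le_mul_of_nonneg_left h2 (abs_nonneg w)
    have := abs_nonneg w; have := abs_nonneg g₁
    rw [hM]; nlinarith
  set η : ℝ := min (1 / 6) (min A (B / 2)) with hη
  have hη0 : 0 < η := by positivity
  have hη1 : η ≤ 1 / 6 := min_le_left _ _
  have hη2 : η ≤ A := (min_le_right _ _).trans (min_le_left _ _)
  have hη3 : η ≤ B / 2 := (min_le_right _ _).trans (min_le_right _ _)
  -- for `|t| < 1 / (6M)` the affine term is at least `1 / 2` on `[-1, 2]`, while outside that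
  -- interval `α` grows linearly
  set s : Set ℝ := Metric.ball 0 (1 / (6 * M)) with hs
  have hsn : s ∈ nhds (0 : ℝ) := Metric.ball_mem_nhds _ (by positivity)
  have hlow : ∀ t ∈ s, ∀ w, η * (1 + |w|) ≤ max (α w) |1 + t * g w| := by
    intro t ht w
    rw [hs, mem_ball_zero_iff, Real.norm_eq_abs, lt_div_iff₀ (by positivity)] at ht
    rcases lt_or_ge w (-1) with hw | hw
    · apply le_max_of_le_left
      rw [abs_of_neg (by linarith)]
      nlinarith [hα1 w]
    rcases lt_or_ge 2 w with hw2 | hw2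
    · apply le_max_of_le_left
      rw [abs_of_pos (by linarith)]
      nlinarith [hα2 w]
    · apply le_max_of_le_right
      have hw3 : |w| ≤ 2 := abs_le.2 ⟨by linarith, hw2⟩
      have h1 : |t * g w| ≤ 1 / 2 := by
        rw [abs_mul]
        calc |t| * |g w| ≤ |t| * (M * (1 + |w|)) := by gcongr; exact hgM w
          _ ≤ |t| * (M * (1 + 2)) := by gcongr
          _ ≤ 1 / 2 := by linarith
      have h2 : 1 / 2 ≤ |1 + t * g w| := by
        rw [abs_le] at h1
        exact le_trans (by linarith) (le_abs_self _)
      have := abs_nonneg w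
      nlinarith
  have hmpos : ∀ w : ℝ, 0 < η * (1 + |w|) := fun w => by positivity
  have hbase : ∀ w : ℝ, (1 + |w|)⁻¹ ^ 2 ≤ (1 + w ^ 2)⁻¹ := by
    intro w
    rw [inv_pow]
    apply inv_anti₀ (by positivity)
    have := abs_nonneg w
    nlinarith [sq_abs w]
  have hmeas : ∀ t : ℝ, Measurable (fun w => (max (α w) |1 + t * g w|)⁻¹ ^ 2) := by
    intro t
    have := hα.measurable; have := hgc.measurable
    fun_prop
  have hint : ∀ t ∈ s, Integrable (fun w => (max (α w) |1 + t * g w|)⁻¹ ^ 2) := by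
    intro t ht
    refine Integrable.mono' (integrable_inv_one_add_sq.const_mul (η⁻¹ ^ 2))
      (hmeas t).aestronglyMeasurable (Filter.Eventually.of_forall fun w => ?_)
    rw [Real.norm_eq_abs, abs_of_nonneg (by positivity)]
    calc (max (α w) |1 + t * g w|)⁻¹ ^ 2 ≤ (η * (1 + |w|))⁻¹ ^ 2 := by
          have h := hlow t ht w
          have h0 := hmpos w
          gcongr
      _ = η⁻¹ ^ 2 * (1 + |w|)⁻¹ ^ 2 := by rw [mul_inv, mul_pow]
      _ ≤ _ := by gcongr; exact hbase w
  refine ⟨?_, ?_⟩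
  · filter_upwards [hsn] with t ht
    exact ⟨fun w => (hmpos w).trans_le (hlow t ht w), hint t ht⟩
  have key := hasDerivAt_integral_of_dominated_loc_of_lip (μ := volume) (𝕜 := ℝ) (x₀ := (0 : ℝ))
    (F := fun t w => (max (α w) |1 + t * g w|)⁻¹ ^ 2)
    (F' := Set.indicator (Set.Ioo 0 1) (fun w => -2 * g w))
    (bound := fun w => 2 * M * η⁻¹ ^ 3 * (1 + w ^ 2)⁻¹) hsn
    (Filter.Eventually.of_forall fun t => (hmeas t).aestronglyMeasurable)
    (hint 0 (mem_of_mem_nhds hsn))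
    (Measurable.aestronglyMeasurable
      ((hgc.measurable.const_mul _).indicator measurableSet_Ioo))
    (Filter.Eventually.of_forall fun w => ?_)
    (integrable_inv_one_add_sq.const_mul _) ?_
  · have h := key.2
    have e : ∫ w, Set.indicator (Set.Ioo 0 1) (fun w => -2 * g w) w = -(g₀ + g₁) := by
      rw [integral_indicator measurableSet_Ioo, ← integral_Ioc_eq_integral_Ioo,
        ← intervalIntegral.integral_of_le zero_le_one]
      simp only [hg]
      rw [intervalIntegral.integral_const_mul, intervalIntegral.integral_add
        (by simp) (Continuous.intervalIntegrable (by fun_prop) _ _),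
        intervalIntegral.integral_mul_const]
      simp
      ring
    rw [e] at h
    exact h
  · rw [lipschitzOnWith_iff_dist_le_mul]
    intro t ht t' ht'
    rw [Real.dist_eq, Real.dist_eq, Real.coe_nnabs,
      abs_of_nonneg (a := 2 * M * η⁻¹ ^ 3 * (1 + w ^ 2)⁻¹) (by positivity)]
    have h1 := abs_inv_sq_sub_le (hmpos w) (hlow t ht w) (hlow t' ht' w)
    have h2 : |(max (α w) |1 + t * g w|) - (max (α w) |1 + t' * g w|)| ≤ |t - t'| * |g w| := by
      refine (abs_max_sub_max_le_max _ _ _ _).trans ?_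
      rw [sub_self, abs_zero, max_eq_right (abs_nonneg _)]
      refine (abs_abs_sub_abs_le _ _).trans ?_
      rw [← abs_mul]
      apply le_of_eq; congr 1; ring
    have hw : (1 + |w|) ≠ 0 := by positivity
    calc _ ≤ 2 * (η * (1 + |w|))⁻¹ ^ 3 * (|t - t'| * |g w|) := by
          refine h1.trans ?_
          have := hmpos w
          gcongr
      _ ≤ 2 * (η * (1 + |w|))⁻¹ ^ 3 * (|t - t'| * (M * (1 + |w|))) := by
          have := hmpos w
          gcongr
          exact hgM w
      _ = 2 * M * η⁻¹ ^ 3 * (1 + |w|)⁻¹ ^ 2 * |t - t'| := by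
          field_simp
      _ ≤ _ := by
          gcongr
          exact hbase w
  · filter_upwards [Measure.ae_ne volume (0 : ℝ), Measure.ae_ne volume (1 : ℝ)] with w hw0 hw1
    have hc : Filter.Tendsto (fun t : ℝ => 1 + t * g w) (nhds 0) (nhds 1) := by
      have : Continuous (fun t : ℝ => 1 + t * g w) := by fun_prop
      simpa using this.tendsto 0
    have hout : 1 < α w → HasDerivAt (fun t : ℝ => (max (α w) |1 + t * g w|)⁻¹ ^ 2) 0 0 := by
      intro h
      refine (hasDerivAt_const (0 : ℝ) ((α w)⁻¹ ^ 2)).congr_of_eventuallyEq ?_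
      have hc' : Filter.Tendsto (fun t : ℝ => |1 + t * g w|) (nhds 0) (nhds 1) := by
        simpa using hc.abs
      filter_upwards [hc'.eventually (gt_mem_nhds h)] with t ht
      rw [max_eq_left ht.le]
    by_cases hw : w ∈ Set.Ioo (0 : ℝ) 1
    · rw [Set.indicator_of_mem hw]
      have h := hα3 w hw.1 hw.2
      have hd : HasDerivAt (fun t : ℝ => (1 + t * g w)⁻¹ ^ 2) (-2 * g w) 0 := by
        have h1 : HasDerivAt (fun t : ℝ => 1 + t * g w) (g w) 0 := by
          simpa using ((hasDerivAt_id (0 : ℝ)).mul_const (g w)).const_add 1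
        refine ((h1.inv (by simp)).pow 2).congr_deriv ?_
        simp
      refine hd.congr_of_eventuallyEq ?_
      filter_upwards [hc.eventually (lt_mem_nhds h), hc.eventually (lt_mem_nhds one_pos)]
        with t ht ht'
      rw [abs_of_pos ht', max_eq_right ht.le]
    · rw [Set.indicator_of_notMem hw]
      apply hout
      rcases lt_or_gt_of_ne hw0 with h | h
      · nlinarith [hα1 w]
      · have : 1 < w := by
          by_contra hcon
          exact hw ⟨h, lt_of_le_of_ne (not_lt.1 hcon) hw1⟩
        nlinarith [hα2 w]

/-! ### Planar geometry -/

/-- An edge `pq` of `K` lies on a line `⟪·, y⟫ = 1` supporting `K`; `y` is the dual vertex of `K*`. -/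
lemma exists_support {K : Set E2} (hK : Convex ℝ K) (h0 : (0 : E2) ∈ interior K)
    {p q : E2} (hp : p ∈ K) (hq : q ∈ K) (hseg : segment ℝ p q ⊆ frontier K) :
    ∃ y : E2, (∀ x ∈ K, ⟪x, y⟫ ≤ 1) ∧ ⟪p, y⟫ = 1 ∧ ⟪q, y⟫ = 1 := by
  set m : E2 := (1 / 2 : ℝ) • p + (1 / 2 : ℝ) • q with hm
  have hmf : m ∈ frontier K :=
    hseg ⟨1 / 2, 1 / 2, by norm_num, by norm_num, by norm_num, rfl⟩
  obtain ⟨f, hf⟩ := geometric_hahn_banach_open_point hK.interior isOpen_interior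
    (fun h => hmf.2 h)
  have hfm : 0 < f m := by simpa using hf 0 h0
  have hle : ∀ x ∈ K, f x ≤ f m := by
    intro x hx
    have hx' : x ∈ closure (interior K) := by
      rw [hK.closure_interior_eq_closure_of_nonempty_interior ⟨0, h0⟩]
      exact subset_closure hx
    exact closure_minimal (t := {x | f x ≤ f m}) (fun z hz => (hf z hz).le)
      (isClosed_le f.continuous continuous_const) hx'
  have hinner : ∀ x, ⟪x, (f m)⁻¹ • (InnerProductSpace.toDual ℝ E2).symm f⟫ = f x / f m := by
    intro x
    rw [inner_smul_right, real_inner_comm, InnerProductSpace.toDual_symm_apply, div_eq_inv_mul]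
  have hmm : f m = (f p + f q) / 2 := by rw [hm]; simp; ring
  have hp' := hle p hp
  have hq' := hle q hq
  refine ⟨(f m)⁻¹ • (InnerProductSpace.toDual ℝ E2).symm f, fun x hx => ?_, ?_, ?_⟩
  · rw [hinner, div_le_one hfm]; exact hle x hx
  · rw [hinner, div_eq_one_iff_eq hfm.ne']; linarith
  · rw [hinner, div_eq_one_iff_eq hfm.ne']; linarith

lemma inner_coord (x y : E2) : ⟪x, y⟫ = x 0 * y 0 + x 1 * y 1 := by
  simp [PiLp.inner_apply, Fin.sum_univ_two]; ring

lemma det_ne_zero_of_ne {a b p : E2} (hab : a ≠ b) (ha : ⟪p, a⟫ = 1) (hb : ⟪p, b⟫ = 1) :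
    a 0 * b 1 - a 1 * b 0 ≠ 0 := by
  intro h
  rw [inner_coord] at ha hb
  apply hab
  ext i
  fin_cases i
  · simp only [Fin.zero_eta, Fin.isValue]
    linear_combination p 1 * h - a 0 * hb + b 0 * ha
  · simp only [Fin.mk_one, Fin.isValue]
    linear_combination -p 0 * h - a 1 * hb + b 1 * ha

lemma eq_of_inner_eq {a b : E2} (hab : a 0 * b 1 - a 1 * b 0 ≠ 0) {x y : E2}
    (ha : ⟪x, a⟫ = ⟪y, a⟫) (hb : ⟪x, b⟫ = ⟪y, b⟫) : x = y := by
  rw [inner_coord, inner_coord] at ha hb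
  ext i
  apply mul_left_cancel₀ hab
  fin_cases i
  · simp only [Fin.zero_eta, Fin.isValue]
    linear_combination b 1 * ha - a 1 * hb
  · simp only [Fin.mk_one, Fin.isValue]
    linear_combination a 0 * hb - b 0 * ha

/-- If `L` contains the strip `|⟪·, y⟫| ≤ c` of `K` and a sheared copy of the cap `⟪·, y⟫ > c` of `K`, where
the shear is parallel to the boundary of the cap, then by symmetry `L` has at least the area of `K`. -/
lemma volume_le_of_shear {K L : Set E2} (hK : K = -K) (hL : L = -L)
    (y u : E2) (c r : ℝ) (hc : 0 ≤ c) (hu : ⟪u, y⟫ = 0)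
    (h1 : ∀ x ∈ K, |⟪x, y⟫| ≤ c → x ∈ L)
    (h2 : ∀ x ∈ K, c < ⟪x, y⟫ → x + (r * (⟪x, y⟫ - c)) • u ∈ L) :
    volume K ≤ volume L := by
  have hcont : Continuous fun x : E2 => ⟪x, y⟫ := by fun_prop
  have hU : MeasurableSet {x : E2 | c < ⟪x, y⟫} :=
    measurableSet_lt measurable_const hcont.measurable
  have hD : MeasurableSet {x : E2 | ⟪x, y⟫ < -c} :=
    measurableSet_lt hcont.measurable measurable_const
  have hsplit : ∀ M : Set E2, volume M = volume (M ∩ {x : E2 | c < ⟪x, y⟫}) +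
      (volume (M ∩ {x : E2 | ⟪x, y⟫ < -c}) + volume (M ∩ {x : E2 | |⟪x, y⟫| ≤ c})) := by
    intro M
    rw [← measure_inter_add_sdiff M hU, ← measure_inter_add_sdiff (M \ {x : E2 | c < ⟪x, y⟫}) hD]
    congr 3
    · ext x
      simp only [Set.mem_inter_iff, Set.mem_sdiff, Set.mem_ofPred_eq]
      constructor
      · rintro ⟨⟨h, _⟩, h'⟩; exact ⟨h, h'⟩
      · rintro ⟨h, h'⟩; exact ⟨⟨h, by linarith⟩, h'⟩
    · ext x
      simp only [Set.mem_inter_iff, Set.mem_sdiff, Set.mem_ofPred_eq, abs_le, not_lt]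
      tauto
  have hneg : ∀ M : Set E2, M = -M →
      volume (M ∩ {x : E2 | ⟪x, y⟫ < -c}) = volume (M ∩ {x : E2 | c < ⟪x, y⟫}) := by
    intro M hM
    rw [← Measure.measure_neg volume (M ∩ {x : E2 | c < ⟪x, y⟫}), Set.inter_neg, ← hM]
    congr 2
    ext x
    simp [lt_neg]
  have hcap : volume (K ∩ {x : E2 | c < ⟪x, y⟫}) ≤ volume (L ∩ {x : E2 | c < ⟪x, y⟫}) := by
    let φ : Module.Dual ℝ E2 := r • (innerₛₗ ℝ y)
    have hφ : ∀ x, φ x = r * ⟪x, y⟫ := fun x => by simp [φ, real_inner_comm]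
    have hdet : LinearMap.det (LinearMap.transvection φ u) = 1 := by
      rw [LinearMap.transvection.det, hφ, hu]; simp
    have himg : volume ((fun z => (-(r * c)) • u + z) '' (LinearMap.transvection φ u ''
        (K ∩ {x : E2 | c < ⟪x, y⟫}))) = volume (K ∩ {x : E2 | c < ⟪x, y⟫}) := by
      rw [Set.image_add_left, measure_preimage_add, Measure.addHaar_image_linearMap, hdet]
      simp
    rw [← himg]
    apply measure_mono
    rintro _ ⟨_, ⟨x, ⟨hxK, hxc⟩, rfl⟩, rfl⟩
    have e : (-(r * c)) • u + LinearMap.transvection φ u x = x + (r * (⟪x, y⟫ - c)) • u := by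
      rw [LinearMap.transvection.apply, hφ]; module
    simp only [e]
    refine ⟨h2 x hxK hxc, ?_⟩
    simp only [Set.mem_ofPred_eq] at hxc ⊢
    rw [inner_add_left, inner_smul_left, hu]
    simpa using hxc
  rw [hsplit K, hsplit L, hneg K hK, hneg L hL]
  exact add_le_add hcap (add_le_add hcap
    (measure_mono fun x hx => ⟨h1 x hx.1 hx.2, hx.2⟩))

/-- A point `x` of the segment from `p` to `q ∈ Q` that lies on the same side of the line `⟪·, y⟫ = c` as
`q` belongs to `Q`, provided the segment crosses that line inside `Q`. -/
lemma mem_of_segment_cut {Q : Set E2} (hQ : Convex ℝ Q) {p q x y : E2} {c : ℝ} (hq : q ∈ Q)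
    (hx : x ∈ segment ℝ p q) (hqc : ⟪q, y⟫ ≤ c) (hxc : ⟪x, y⟫ ≤ c) (hpc : c < ⟪p, y⟫)
    (hcut : ∀ r ∈ segment ℝ p q, ⟪r, y⟫ = c → r ∈ Q) : x ∈ Q := by
  obtain ⟨s, t, hs, ht, hst, rfl⟩ := hx
  rw [inner_add_left, inner_smul_left, inner_smul_left] at hxc
  simp only [conj_trivial] at hxc
  -- `k` is the weight of `p` at which the segment crosses the line at level `c`
  set P := ⟪p, y⟫
  set R := ⟪q, y⟫
  have hPR : 0 < P - R := by linarith
  obtain rfl : t = 1 - s := by linarith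
  set k := (c - R) / (P - R) with hk
  have hkP : k * (P - R) = c - R := by rw [hk]; field_simp
  have hk0 : 0 ≤ k := div_nonneg (by linarith) hPR.le
  have hk1 : k ≤ 1 := by rw [hk, div_le_one hPR]; linarith
  have hr : k • p + (1 - k) • q ∈ Q := by
    apply hcut _ ⟨k, 1 - k, hk0, by linarith, by ring, rfl⟩
    rw [inner_add_left, inner_smul_left, inner_smul_left]
    simp only [conj_trivial]
    change k * P + (1 - k) * R = c
    linarith
  have hsk : s ≤ k := by rw [hk, le_div_iff₀ hPR]; linarith
  rcases hk0.eq_or_lt with h | h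
  · have : s = 0 := by linarith
    simpa [this] using hq
  · have := hQ hr hq (a := s / k) (b := 1 - s / k) (by positivity)
      (by rw [sub_nonneg, div_le_one h]; exact hsk) (by ring)
    convert this using 1
    have e : s / k * k = s := by field_simp
    rw [smul_add, smul_smul, smul_smul, e, add_assoc, ← add_smul]
    congr 2
    linear_combination e

lemma polarBody_convexHull (T : Set E2) :
    polarBody (convexHull ℝ T) = {y | ∀ x ∈ T, ⟪x, y⟫ ≤ 1} := by
  ext y
  constructor
  · intro h x hx
    exact h x (subset_convexHull ℝ T hx)
  · intro h x hx
    have hconv : Convex ℝ {x : E2 | ⟪x, y⟫ ≤ 1} :=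
      convex_halfSpace_le ⟨fun p q => inner_add_left p q y, fun c p => by
        simp [inner_smul_left]⟩ 1
    exact convexHull_min (fun z hz => h z hz) hconv hx

lemma neg_convexHull_of_neg {T : Set E2} (hT : ∀ x ∈ T, -x ∈ T) :
    convexHull ℝ T = -convexHull ℝ T := by
  rw [← convexHull_neg]
  congr 1
  ext x
  exact ⟨fun h => hT x h, fun h => by simpa using hT _ h⟩

lemma zero_mem_interior_of_volume_pos {L : Set E2} (hL : Convex ℝ L) (hsym : L = -L)
    (hvol : 0 < volume L) : (0 : E2) ∈ interior L := by
  have hne : (interior L).Nonempty := by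
    rw [Set.nonempty_iff_ne_empty]
    intro h
    have hsub : L ⊆ frontier L := fun x hx => ⟨subset_closure hx, by simp [h]⟩
    have := measure_mono (μ := volume) hsub
    rw [hL.addHaar_frontier volume] at this
    exact absurd hvol (not_lt.2 this)
  obtain ⟨z, hz⟩ := hne
  have hz' : -z ∈ interior L := by
    have : -interior L = interior (-L) := (Homeomorph.neg E2).preimage_interior L
    rw [hsym, ← this]
    simpa using hz
  have := hL.interior hz hz' (a := 1 / 2) (b := 1 / 2) (by norm_num) (by norm_num) (by norm_num)
  simpa using this

/-- Three distinct extreme points are not on one line, so the two edges at `x₂` have different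
supporting lines. -/
lemma ne_of_support_extreme {K : Set E2} {x₁ x₂ x₃ a b : E2}
    (hx₁ : x₁ ∈ K.extremePoints ℝ) (hx₂ : x₂ ∈ K.extremePoints ℝ)
    (hx₃ : x₃ ∈ K.extremePoints ℝ)
    (h12 : x₁ ≠ x₂) (h23 : x₂ ≠ x₃) (h13 : x₁ ≠ x₃)
    (h1a : ⟪x₁, a⟫ = 1) (h2a : ⟪x₂, a⟫ = 1) (h3b : ⟪x₃, b⟫ = 1) : a ≠ b := by
  rintro rfl
  have hcol : Collinear ℝ {x₁, x₂, x₃} := by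
    rw [collinear_iff_of_mem (p₀ := x₂) (by simp)]
    refine ⟨!₂[-a 1, a 0], fun p hp => ?_⟩
    have hpa : ⟪p, a⟫ = 1 := by
      rcases hp with rfl | rfl | rfl <;> assumption
    rw [inner_coord] at hpa h2a
    have hne : a 0 ^ 2 + a 1 ^ 2 ≠ 0 := by
      intro h
      have h0 : a 0 = 0 := by nlinarith [sq_nonneg (a 0), sq_nonneg (a 1)]
      have h1 : a 1 = 0 := by nlinarith [sq_nonneg (a 0), sq_nonneg (a 1)]
      simp [h0, h1] at h2a
    refine ⟨((p 1 - x₂ 1) * a 0 - (p 0 - x₂ 0) * a 1) / (a 0 ^ 2 + a 1 ^ 2), ?_⟩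
    ext i
    fin_cases i
    · simp
      field_simp
      linear_combination a 0 * hpa - a 0 * h2a
    · simp
      field_simp
      linear_combination a 1 * hpa - a 1 * h2a
  rw [mem_extremePoints_iff_forall_segment] at hx₁ hx₂ hx₃
  rcases hcol.wbtw_or_wbtw_or_wbtw with h | h | h
  · rcases hx₂.2 x₁ hx₁.1 x₃ hx₃.1 (mem_segment_iff_wbtw.2 h) with h | h
    · exact h12 h
    · exact h23 h.symm
  · rcases hx₃.2 x₂ hx₂.1 x₁ hx₁.1 (mem_segment_iff_wbtw.2 h) with h | h
    · exact h23 h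
    · exact h13 h
  · rcases hx₁.2 x₃ hx₃.1 x₂ hx₂.1 (mem_segment_iff_wbtw.2 h) with h | h
    · exact h13 h.symm
    · exact h12 h.symm

/-- Barycentric coordinates with respect to `x₁, x₂, x₃`: each is the normalized signed distance to
the opposite side of the triangle. -/
lemma barycentric {x₁ x₂ x₃ a b : E2} {A B : ℝ} (hdet : a 0 * b 1 - a 1 * b 0 ≠ 0)
    (hA : A ≠ 0) (hB : B ≠ 0) (h1a : ⟪x₁, a⟫ = 1) (h2a : ⟪x₂, a⟫ = 1) (h3a : ⟪x₃, a⟫ = 1 - B)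
    (h1b : ⟪x₁, b⟫ = 1 - A) (h2b : ⟪x₂, b⟫ = 1) (h3b : ⟪x₃, b⟫ = 1) (x : E2) :
    x = ((1 - ⟪x, b⟫) / A) • x₁ + ((⟪x, A • a + B • b⟫ - (A + B - A * B)) / (A * B)) • x₂
      + ((1 - ⟪x, a⟫) / B) • x₃ := by
  apply eq_of_inner_eq hdet
  · simp only [inner_add_left, inner_smul_left, inner_add_right, inner_smul_right, conj_trivial,
      h1a, h2a, h3a]
    field_simp
    ring
  · simp only [inner_add_left, inner_smul_left, inner_add_right, inner_smul_right, conj_trivial,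
      h1b, h2b, h3b]
    field_simp
    ring

lemma extreme_eq_of_bary {K : Set E2} (hK : Convex ℝ K) {x₁ x₂ x₃ x : E2} (hx₁ : x₁ ∈ K)
    (hx₂ : x₂ ∈ K) (hx₃ : x₃ ∈ K) (hx : x ∈ K.extremePoints ℝ) {p q r : ℝ} (hp : 0 ≤ p)
    (hq : 0 < q) (hr : 0 ≤ r) (hsum : p + q + r = 1) (hxe : x = p • x₁ + q • x₂ + r • x₃) :
    x = x₂ := by
  rcases eq_or_lt_of_le (add_nonneg hp hr) with h | h
  · have hp0 : p = 0 := by linarith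
    have hr0 : r = 0 := by linarith
    have hq1 : q = 1 := by linarith
    simpa [hp0, hr0, hq1] using hxe
  · have hm : (p / (p + r)) • x₁ + (r / (p + r)) • x₃ ∈ K :=
      hK hx₁ hx₃ (by positivity) (by positivity) (by field_simp)
    refine ((mem_extremePoints_iff_left.1 hx).2 x₂ hx₂ _ hm ⟨q, p + r, hq, h, by linarith, ?_⟩).symm
    rw [hxe, smul_add, smul_smul, smul_smul, mul_div_cancel₀ _ h.ne', mul_div_cancel₀ _ h.ne']
    module

/-! ### The perturbed polygon -/

/-- Sliding `x₂` parallel to `x₁x₃` does not decrease the area: any symmetric convex `L` that contains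
the vertices of `K` other than `±x₂`, and also `x₂ + t • (x₃ - x₁)`, has at least the area of `K`. -/
lemma volume_le_perturbed {S' : Finset E2} {K L : Set E2} {x₁ x₂ x₃ a b : E2} {A B : ℝ}
    (t : ℝ) (hK : K = convexHull ℝ (insert x₂ (insert (-x₂) (S' : Set E2))))
    (hsym : K = -K) (hL : Convex ℝ L) (hLsym : L = -L)
    (hS'L : (S' : Set E2) ⊆ L) (hxL : x₂ + t • (x₃ - x₁) ∈ L)
    (hS' : ∀ x ∈ S', -x ∈ S') (hx₁ : x₁ ∈ S') (hx₃ : x₃ ∈ S')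
    (hdet : a 0 * b 1 - a 1 * b 0 ≠ 0) (hA : 0 < A) (hB : 0 < B)
    (ha : ∀ x ∈ K, ⟪x, a⟫ ≤ 1) (hb : ∀ x ∈ K, ⟪x, b⟫ ≤ 1)
    (h1a : ⟪x₁, a⟫ = 1) (h2a : ⟪x₂, a⟫ = 1) (h3a : ⟪x₃, a⟫ = 1 - B)
    (h1b : ⟪x₁, b⟫ = 1 - A) (h2b : ⟪x₂, b⟫ = 1) (h3b : ⟪x₃, b⟫ = 1)
    (hcap : ∀ x ∈ S', ⟪x, A • a + B • b⟫ ≤ A + B - A * B) :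
    volume K ≤ volume L := by
  set y := A • a + B • b with hy
  set c := A + B - A * B with hc
  have hAB : 0 < A * B := mul_pos hA hB
  have hyx : ∀ x, ⟪x, y⟫ = A * ⟪x, a⟫ + B * ⟪x, b⟫ := fun x => by
    rw [hy, inner_add_right, inner_smul_right, inner_smul_right]
  have hy1 : ⟪x₁, y⟫ = c := by rw [hyx, h1a, h1b]; ring
  have hy3 : ⟪x₃, y⟫ = c := by rw [hyx, h3a, h3b]; ring
  have hy2 : ⟪x₂, y⟫ = c + A * B := by rw [hyx, h2a, h2b]; ring
  have hc0 : 0 ≤ c := by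
    have := hcap _ (hS' _ hx₁)
    rw [inner_neg_left, hy1] at this
    linarith
  have hQL : convexHull ℝ (S' : Set E2) ⊆ L := convexHull_min hS'L hL
  have hKconv : Convex ℝ K := hK ▸ convex_convexHull ℝ _
  have hx₁Q := subset_convexHull ℝ (S' : Set E2) hx₁
  have hx₃Q := subset_convexHull ℝ (S' : Set E2) hx₃
  have hbary := barycentric hdet hA.ne' hB.ne' h1a h2a h3a h1b h2b h3b
  have hsum : ∀ x, (1 - ⟪x, b⟫) / A + (⟪x, y⟫ - c) / (A * B) + (1 - ⟪x, a⟫) / B = 1 := by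
    intro x
    rw [hyx]
    field_simp
    ring
  -- the line through `x₁` and `x₃` meets `K` only in the segment between them
  have hline : ∀ r ∈ K, ⟪r, y⟫ = c → r ∈ convexHull ℝ (S' : Set E2) := by
    intro r hr hrc
    have h := hbary r
    have hs := hsum r
    rw [← hy, ← hc, hrc, sub_self, zero_div, zero_smul, add_zero] at h
    rw [hrc, sub_self, zero_div, add_zero] at hs
    rw [h]
    exact convex_convexHull ℝ _ hx₁Q hx₃Q (div_nonneg (by linarith [hb r hr]) hA.le)
      (div_nonneg (by linarith [ha r hr]) hB.le) hs
  have hQsym : convexHull ℝ (S' : Set E2) = -convexHull ℝ (S' : Set E2) :=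
    neg_convexHull_of_neg (fun x hx => hS' x hx)
  have hle : ∀ (T : Set E2), (∀ x ∈ T, ⟪x, y⟫ ≤ c) → ∀ x ∈ convexHull ℝ T, ⟪x, y⟫ ≤ c := by
    intro T hT x hx
    have hconv : Convex ℝ {x : E2 | ⟪x, y⟫ ≤ c} :=
      convex_halfSpace_le ⟨fun p q => inner_add_left p q y, fun c p => by
        simp [inner_smul_left]⟩ c
    exact convexHull_min (fun z hz => hT z hz) hconv hx
  have hnegK : ∀ x ∈ K, -x ∈ K := fun x hx => by
    rw [hsym] at hx; exact hx
  have hS'K : convexHull ℝ (insert (-x₂) (S' : Set E2)) ⊆ K := by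
    rw [hK]; exact convexHull_mono (Set.subset_insert _ _)
  have hx₂K : x₂ ∈ K := by rw [hK]; exact subset_convexHull ℝ _ (by simp)
  have hQK : convexHull ℝ (S' : Set E2) ⊆ K :=
    (convexHull_mono (Set.subset_insert _ _)).trans hS'K
  apply volume_le_of_shear hsym hLsym y (x₃ - x₁) c (t / (A * B)) hc0
  · rw [inner_sub_left, hy1, hy3, sub_self]
  · intro x hx hxc
    rw [abs_le] at hxc
    apply hQL
    -- first discard `x₂`, then `-x₂`, from the vertices whose hull contains `x`
    have hx' := hx
    rw [hK, convexHull_insert ⟨-x₂, by simp⟩, mem_convexJoin] at hx'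
    obtain ⟨p, hp, q, hq, hxq⟩ := hx'
    rw [Set.mem_singleton_iff.1 hp] at hxq
    have hx1 : x ∈ convexHull ℝ (insert (-x₂) (S' : Set E2)) := by
      refine mem_of_segment_cut (convex_convexHull ℝ _) (y := y) (c := c) hq hxq ?_ hxc.2
        (by rw [hy2]; linarith) ?_
      · refine hle _ ?_ q hq
        rintro z (rfl | hz)
        · rw [inner_neg_left, hy2]; linarith
        · exact hcap z hz
      · intro r hr hrc
        exact convexHull_mono (Set.subset_insert _ _)
          (hline r (hKconv.segment_subset hx₂K (hS'K hq) hr) hrc)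
    rw [convexHull_insert ⟨x₁, hx₁⟩, mem_convexJoin] at hx1
    obtain ⟨p', hp', q', hq', hxq'⟩ := hx1
    rw [Set.mem_singleton_iff.1 hp'] at hxq'
    refine mem_of_segment_cut (convex_convexHull ℝ _) (y := -y) (c := c) hq' hxq' ?_
      (by rw [inner_neg_right]; linarith)
      (by rw [inner_neg_neg, hy2]; linarith) ?_
    · rw [inner_neg_right, ← inner_neg_left]
      rw [hQsym] at hq'
      exact hle _ hcap _ hq'
    · intro r hr hrc
      have hrK : r ∈ K := hKconv.segment_subset (hnegK _ hx₂K) (hQK hq') hr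
      rw [hQsym]
      exact hline (-r) (hnegK _ hrK) (by rw [inner_neg_left, ← inner_neg_right]; exact hrc)
  · intro x hx hxc
    have e : x + (t / (A * B) * (⟪x, y⟫ - c)) • (x₃ - x₁) =
        ((1 - ⟪x, b⟫) / A) • x₁ + ((⟪x, y⟫ - c) / (A * B)) • (x₂ + t • (x₃ - x₁))
          + ((1 - ⟪x, a⟫) / B) • x₃ := by
      have h := hbary x
      rw [← hy, ← hc] at h
      have e1 : t / (A * B) * (⟪x, y⟫ - c) = (⟪x, y⟫ - c) / (A * B) * t := by ring
      rw [e1]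
      generalize (1 - ⟪x, b⟫) / A = P, (⟪x, y⟫ - c) / (A * B) = Q, (1 - ⟪x, a⟫) / B = R at h ⊢
      rw [h]
      module
    rw [e]
    have hp : 0 ≤ (1 - ⟪x, b⟫) / A := div_nonneg (by linarith [hb x hx]) hA.le
    have hr : 0 ≤ (1 - ⟪x, a⟫) / B := div_nonneg (by linarith [ha x hx]) hB.le
    have hq : 0 ≤ (⟪x, y⟫ - c) / (A * B) := div_nonneg (by linarith) hAB.le
    have h3 := hL.sum_mem (t := Finset.univ)
      (w := ![(1 - ⟪x, b⟫) / A, (⟪x, y⟫ - c) / (A * B), (1 - ⟪x, a⟫) / B])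
      (z := ![x₁, x₂ + t • (x₃ - x₁), x₃])
      (by intro i _; fin_cases i <;> simpa)
      (by simpa [Fin.sum_univ_three] using hsum x)
      (by intro i _; fin_cases i; exacts [hS'L hx₁, hxL, hS'L hx₃])
    simpa [Fin.sum_univ_three] using h3

/-- The support function of the convex hull of `±z` and all `±x` with `x` in the given finite set.  The
absolute values make it absolutely homogeneous even if that set is not symmetric. -/
def supportMax (S' : Finset E2) (hS' : S'.Nonempty) (z y : E2) : ℝ :=
  max (S'.sup' hS' fun x => |⟪x, y⟫|) |⟪z, y⟫|

lemma polarBody_eq_supportMax {S' : Finset E2} (hne : S'.Nonempty)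
    (hS' : ∀ x ∈ S', -x ∈ S') (z : E2) :
    polarBody (convexHull ℝ (insert z (insert (-z) (S' : Set E2))))
      = {y | supportMax S' hne z y ≤ 1} := by
  rw [polarBody_convexHull]
  ext y
  simp only [Set.mem_ofPred_eq, supportMax, max_le_iff, Finset.sup'_le_iff, abs_le]
  constructor
  · intro h
    refine ⟨fun x hx => ⟨?_, h x (by simp [hx])⟩, ?_, h z (by simp)⟩
    · have := h (-x) (by simp [hS' x hx])
      rw [inner_neg_left] at this; linarith
    · have := h (-z) (by simp)
      rw [inner_neg_left] at this; linarith
  · rintro ⟨h1, h2, h3⟩ x (rfl | rfl | hx)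
    · exact h3
    · rw [inner_neg_left]; linarith
    · exact (h1 x hx).2

lemma continuous_supportMax (S' : Finset E2) (hne : S'.Nonempty) (z : E2) :
    Continuous (supportMax S' hne z) := by
  unfold supportMax
  refine Continuous.max ?_ (by fun_prop)
  exact Continuous.finset_sup'_apply hne fun x _ => by fun_prop

lemma supportMax_smul (S' : Finset E2) (hne : S'.Nonempty) (z : E2) (s : ℝ) (y : E2) :
    supportMax S' hne z (s • y) = |s| * supportMax S' hne z y := by
  unfold supportMax
  rw [mul_max_of_nonneg _ _ (abs_nonneg s), Finset.mul₀_sup' (abs_nonneg s)]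
  simp only [inner_smul_right, abs_mul]

/-- First-order condition: if moving `±x₂` in the direction `±u` never increases the area of the polar
body, then `u` is orthogonal to the midpoint of the edge `ab` of the polar body. -/
lemma inner_add_eq_zero_of_max {S' : Finset E2} {x₁ x₂ x₃ a b u : E2} {A B : ℝ}
    (hS' : ∀ x ∈ S', -x ∈ S') (hx₁ : x₁ ∈ S') (hx₃ : x₃ ∈ S')
    (hdet : a 0 * b 1 - a 1 * b 0 ≠ 0) (hA : 0 < A) (hB : 0 < B)
    (ha : ∀ x ∈ S', ⟪x, a⟫ ≤ 1) (hb : ∀ x ∈ S', ⟪x, b⟫ ≤ 1) (hx₂ : x₂ ∉ S')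
    (h1a : ⟪x₁, a⟫ = 1) (h2a : ⟪x₂, a⟫ = 1) (h3a : ⟪x₃, a⟫ = 1 - B)
    (h1b : ⟪x₁, b⟫ = 1 - A) (h2b : ⟪x₂, b⟫ = 1) (h3b : ⟪x₃, b⟫ = 1)
    (hmax : ∀ t : ℝ,
      volume (polarBody (convexHull ℝ (insert (x₂ + t • u)
        (insert (-(x₂ + t • u)) (S' : Set E2))))) ≤
      volume (polarBody (convexHull ℝ (insert x₂ (insert (-x₂) (S' : Set E2)))))) :
    ⟪u, a⟫ + ⟪u, b⟫ = 0 := by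
  have hne : S'.Nonempty := ⟨x₁, hx₁⟩
  obtain ⟨D, hD0, hDtop, hD⟩ := polar_area a b hdet
  set α : ℝ → ℝ := fun w => S'.sup' hne fun x => |⟪x, a + w • (b - a)⟫| with hα
  have hexp : ∀ x (w : ℝ), ⟪x, a + w • (b - a)⟫ = (1 - w) * ⟪x, a⟫ + w * ⟪x, b⟫ := by
    intro x w
    rw [inner_add_right, inner_smul_right, inner_sub_right]; ring
  have hge : ∀ x ∈ S', ∀ w, ⟪x, a + w • (b - a)⟫ ≤ α w := fun x hx w =>
    (le_abs_self _).trans (Finset.le_sup' (fun x => |⟪x, a + w • (b - a)⟫|) hx)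
  have hlt : ∀ x ∈ S', ∀ w : ℝ, 0 < w → w < 1 → ⟪x, a + w • (b - a)⟫ < 1 := by
    intro x hx w hw0 hw1
    rw [hexp]
    have h1 := ha x hx
    have h2 := hb x hx
    rcases h1.lt_or_eq with h | h
    · nlinarith
    rcases h2.lt_or_eq with h' | h'
    · nlinarith
    exact absurd (eq_of_inner_eq hdet (h.trans h2a.symm) (h'.trans h2b.symm) ▸ hx) hx₂
  have hsm : ∀ t w : ℝ, supportMax S' hne (x₂ + t • u) (a + w • (b - a))
      = max (α w) |1 + t * (⟪u, a⟫ + w * (⟪u, b⟫ - ⟪u, a⟫))| := by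
    intro t w
    have : ⟪x₂ + t • u, a + w • (b - a)⟫ = 1 + t * (⟪u, a⟫ + w * (⟪u, b⟫ - ⟪u, a⟫)) := by
      rw [inner_add_left, inner_smul_left, hexp, hexp, h2a, h2b]
      simp only [conj_trivial]
      ring
    rw [supportMax, this]
  obtain ⟨hev, hder⟩ := deriv_part A B ⟪u, a⟫ ⟪u, b⟫ hA hB α
    (Continuous.finset_sup'_apply hne fun x _ => by fun_prop)
    (fun w => le_trans (by rw [hexp, h1a, h1b]; linarith) (hge x₁ hx₁ w))
    (fun w => le_trans (by rw [hexp, h3a, h3b]; linarith) (hge x₃ hx₃ w))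
    (fun w hw0 hw1 => by
      rw [hα, Finset.sup'_lt_iff]
      intro x hx
      rw [abs_lt]
      refine ⟨?_, hlt x hx w hw0 hw1⟩
      have := hlt (-x) (hS' x hx) w hw0 hw1
      rw [inner_neg_left] at this
      linarith)
  have hvol : ∀ᶠ t in nhds (0 : ℝ), volume (polarBody (convexHull ℝ (insert (x₂ + t • u)
        (insert (-(x₂ + t • u)) (S' : Set E2))))) = D * ENNReal.ofReal
      (∫ w, (max (α w) |1 + t * (⟪u, a⟫ + w * (⟪u, b⟫ - ⟪u, a⟫))|)⁻¹ ^ 2) := by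
    filter_upwards [hev] with t ht
    rw [polarBody_eq_supportMax hne hS', hD _ (continuous_supportMax _ _ _)
      (supportMax_smul _ _ _) (fun w => by rw [hsm]; exact ht.1 w)]
    congr 1
    rw [ofReal_integral_eq_lintegral_ofReal ht.2
      (Filter.Eventually.of_forall fun w => by positivity)]
    simp only [hsm]
  have h0 := hvol.self_of_nhds
  have hloc : IsLocalMax (fun t : ℝ =>
      ∫ w, (max (α w) |1 + t * (⟪u, a⟫ + w * (⟪u, b⟫ - ⟪u, a⟫))|)⁻¹ ^ 2) 0 := by
    filter_upwards [hvol] with t ht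
    have h := hmax t
    have h0' := h0
    rw [zero_smul, add_zero] at h0'
    rw [ht, h0', ENNReal.mul_le_mul_iff_right hD0 hDtop, ENNReal.ofReal_le_ofReal_iff
      (integral_nonneg fun w => by positivity)] at h
    exact h
  have := hloc.hasDerivAt_eq_zero hder
  linarith

/-! ### The theorem -/

/-- Property (i) of a maximizer of the volume product among o-symmetric n-gons:
for consecutive vertices x₁, x₂, x₃ the points o, (x₁+x₃)/2, x₂ are collinear. -/
theorem maximizer_consecutive_vertices_collinear
    (n : ℕ) (hn6 : 6 ≤ n) (hneven : Even n)
    (S : Finset E2) (hScard : S.card = n)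
    (K : Set E2) (hK : K = convexHull ℝ (S : Set E2))
    (hvert : (S : Set E2) = K.extremePoints ℝ)
    (hsym : K = -K) (h0 : (0 : E2) ∈ interior K)
    (hmax : ∀ (T : Finset E2) (L : Set E2), T.card ≤ n →
      L = convexHull ℝ (T : Set E2) → L = -L → (0 : E2) ∈ interior L →
      volume L * volume (polarBody L) ≤ volume K * volume (polarBody K))
    (x₁ x₂ x₃ : E2)
    (hx₁ : x₁ ∈ K.extremePoints ℝ) (hx₂ : x₂ ∈ K.extremePoints ℝ)
    (hx₃ : x₃ ∈ K.extremePoints ℝ)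
    (h12 : x₁ ≠ x₂) (h23 : x₂ ≠ x₃) (h13 : x₁ ≠ x₃)
    (hedge12 : segment ℝ x₁ x₂ ⊆ frontier K)
    (hedge23 : segment ℝ x₂ x₃ ⊆ frontier K) :
    Collinear ℝ {(0 : E2), (2 : ℝ)⁻¹ • (x₁ + x₃), x₂} := by
  classical
  have hKconv : Convex ℝ K := hK ▸ convex_convexHull ℝ _
  have hKcomp : IsCompact K := hK ▸ S.finite_toSet.isCompact_convexHull ℝ
  obtain ⟨a, ha, h1a, h2a⟩ := exists_support hKconv h0 hx₁.1 hx₂.1 hedge12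
  obtain ⟨b, hb, h2b, h3b⟩ := exists_support hKconv h0 hx₂.1 hx₃.1 hedge23
  have hab := ne_of_support_extreme hx₁ hx₂ hx₃ h12 h23 h13 h1a h2a h3b
  have hdet := det_ne_zero_of_ne hab h2a h2b
  obtain ⟨A, h1b⟩ : ∃ A, ⟪x₁, b⟫ = 1 - A := ⟨1 - ⟪x₁, b⟫, by ring⟩
  obtain ⟨B, h3a⟩ : ∃ B, ⟪x₃, a⟫ = 1 - B := ⟨1 - ⟪x₃, a⟫, by ring⟩
  have hA : 0 < A := by
    have h := hb x₁ hx₁.1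
    refine lt_of_le_of_ne (by linarith) fun h' => h12 (eq_of_inner_eq hdet (by rw [h1a, h2a]) ?_)
    rw [h1b, h2b, ← h']; ring
  have hB : 0 < B := by
    have h := ha x₃ hx₃.1
    refine lt_of_le_of_ne (by linarith) fun h' => h23 (eq_of_inner_eq hdet ?_ (by rw [h2b, h3b]))
    rw [h3a, h2a, ← h']; ring
  have hmem : ∀ x, x ∈ S ↔ x ∈ K.extremePoints ℝ := fun x => by rw [← hvert]; simp
  have hnegK : ∀ x ∈ K, -x ∈ K := fun x hx => by rw [hsym] at hx; exact hx
  have hSneg : ∀ x ∈ S, -x ∈ S := by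
    intro x hx
    rw [hmem, mem_extremePoints_iff_left] at hx ⊢
    refine ⟨hnegK x hx.1, fun p hp q hq hpq => ?_⟩
    have := hx.2 (-p) (hnegK p hp) (-q) (hnegK q hq) (by
      obtain ⟨s, t, hs, ht, hst, he⟩ := hpq
      exact ⟨s, t, hs, ht, hst, by rw [smul_neg, smul_neg, ← neg_add, he, neg_neg]⟩)
    rw [← this, neg_neg]
  have h2S := (hmem _).2 hx₂
  have h22 : -x₂ ≠ x₂ := by
    intro h
    have := congrArg (fun z => ⟪z, a⟫) h
    simp only [inner_neg_left, h2a] at this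
    norm_num at this
  set S' := (S.erase x₂).erase (-x₂) with hS'def
  have hS'mem : ∀ x, x ∈ S' ↔ x ≠ -x₂ ∧ x ≠ x₂ ∧ x ∈ S := by
    intro x; simp [hS'def]
  have hS'neg : ∀ x ∈ S', -x ∈ S' := by
    intro x hx
    rw [hS'mem] at hx ⊢
    exact ⟨fun h => hx.2.1 (neg_inj.1 h), fun h => hx.1 (by rw [← h, neg_neg]), hSneg x hx.2.2⟩
  have h1S' : x₁ ∈ S' := by
    refine (hS'mem _).2 ⟨fun h => ?_, h12, (hmem _).2 hx₁⟩
    rw [h, inner_neg_left, h2a] at h1a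
    norm_num at h1a
  have h3S' : x₃ ∈ S' := by
    refine (hS'mem _).2 ⟨fun h => ?_, h23.symm, (hmem _).2 hx₃⟩
    rw [h, inner_neg_left, h2b] at h3b
    norm_num at h3b
  have hS : S = insert x₂ (insert (-x₂) S') := by
    rw [hS'def, Finset.insert_erase (by simp [h22, hSneg x₂ h2S]), Finset.insert_erase h2S]
  have hcard : S'.card + 2 ≤ n := by
    have h1 := Finset.card_erase_add_one (s := S.erase x₂) (a := -x₂)
      (by simp [h22, hSneg x₂ h2S])
    rw [← hS'def] at h1
    have h2 := Finset.card_erase_add_one h2S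
    omega
  have hK' : K = convexHull ℝ (insert x₂ (insert (-x₂) (S' : Set E2))) := by
    rw [hK]
    conv_lhs => rw [hS]
    push_cast
    rfl
  have hS'K : ∀ x ∈ S', x ∈ K := fun x hx => ((hmem x).1 ((hS'mem x).1 hx).2.2).1
  have hcap : ∀ x ∈ S', ⟪x, A • a + B • b⟫ ≤ A + B - A * B := by
    intro x hx
    by_contra hcon
    push Not at hcon
    apply ((hS'mem x).1 hx).2.1
    refine extreme_eq_of_bary hKconv hx₁.1 hx₂.1 hx₃.1 ((hmem x).1 ((hS'mem x).1 hx).2.2)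
      (div_nonneg (by linarith [hb x (hS'K x hx)]) hA.le)
      (div_pos (by linarith) (mul_pos hA hB))
      (div_nonneg (by linarith [ha x (hS'K x hx)]) hB.le) ?_
      (barycentric hdet hA.ne' hB.ne' h1a h2a h3a h1b h2b h3b x)
    rw [inner_add_right, inner_smul_right, inner_smul_right]
    field_simp
    ring
  -- areas cancel from the volume products because the perturbation does not decrease the area
  have hKpos : 0 < volume K := Measure.measure_pos_of_mem_nhds volume (mem_interior_iff_mem_nhds.1 h0)
  have hcrit := inner_add_eq_zero_of_max (u := x₃ - x₁) hS'neg h1S' h3S' hdet hA hB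
    (fun x hx => ha x (hS'K x hx)) (fun x hx => hb x (hS'K x hx))
    (fun h => ((hS'mem _).1 h).2.1 rfl) h1a h2a h3a h1b h2b h3b (fun t => by
      set z := x₂ + t • (x₃ - x₁) with hz
      set L := convexHull ℝ (insert z (insert (-z) (S' : Set E2))) with hL
      have hLconv : Convex ℝ L := convex_convexHull ℝ _
      have hLsym : L = -L := by
        apply neg_convexHull_of_neg
        rintro x (rfl | rfl | hx)
        · simp
        · simp
        · exact Or.inr (Or.inr (hS'neg x hx))
      have hvol : volume K ≤ volume L :=
        volume_le_perturbed t hK' hsym hLconv hLsym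
          (fun x hx => subset_convexHull ℝ _ (Or.inr (Or.inr hx)))
          (subset_convexHull ℝ _ (Or.inl rfl)) hS'neg h1S' h3S' hdet hA hB ha hb
          h1a h2a h3a h1b h2b h3b hcap
      have hprod := hmax (insert z (insert (-z) S')) L
        (by
          have h1 := Finset.card_insert_le z (insert (-z) S')
          have h2 := Finset.card_insert_le (-z) S'
          omega)
        (by rw [hL]; push_cast; rfl) hLsym
        (zero_mem_interior_of_volume_pos hLconv hLsym (hKpos.trans_le hvol))
      rw [← hK']
      exact (ENNReal.mul_le_mul_iff_right hKpos.ne' hKcomp.measure_lt_top.ne).1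
        ((mul_le_mul_left hvol _).trans hprod))
  have hAB : A = B := by
    rw [inner_sub_left, inner_sub_left, h3a, h1a, h3b, h1b] at hcrit
    linarith
  have hsumx : x₁ + x₃ = (2 - A) • x₂ := by
    apply eq_of_inner_eq hdet
    · rw [inner_add_left, inner_smul_left, h1a, h3a, h2a, hAB]
      simp only [conj_trivial]; ring
    · rw [inner_add_left, inner_smul_left, h1b, h3b, h2b]
      simp only [conj_trivial]; ring
  rw [collinear_iff_of_mem (p₀ := (0 : E2)) (by simp)]
  refine ⟨x₂, ?_⟩
  rintro p (rfl | rfl | rfl)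
  · exact ⟨0, by simp⟩
  · exact ⟨2⁻¹ * (2 - A), by rw [hsumx, smul_smul]; simp⟩
  · exact ⟨1, by simp⟩
end
end
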